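/- arXiv:1306.0852 — 6 statements merged into one kernel-verified Lean document; each statement's English description precedes it below -/
import Mathlib

section
/- Let f : I → ℝ be a differentiable function on an interval I ⊆ (0,∞), and let a, b ∈ I with 0 < a < b, with f' Lebesgue integrable on [a,b]. Then (b²·f(b) − a²·f(a))/2 − ∫_a^b x·f(x) dx = ((ln b − ln a)/2) · ∫_0^1 a^{3(1−t)} · b^{3t} · f'(a^{1−t} b^{t}) dt. -/
open Real MeasureTheory Set

/-- The logarithmic mean `L(x,y) = (y - x)/(ln y - ln x)`. -/
noncomputable def L (x y : ℝ) : ℝ := (y - x) / (Real.log y - Real.log x)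

/-- `G(α,ℓ) = ∫_0^1 t^α a^{ℓ(1-t)} b^{ℓ t} dt` (for parameters `a, b`). -/
noncomputable def G (a b α ℓ : ℝ) : ℝ :=
  ∫ t in (0:ℝ)..1, t ^ α * a ^ (ℓ * (1 - t)) * b ^ (ℓ * t)

/-- A function `h` is `(α,m)`-GA-convex on `[0,c]` if
`h(x^λ y^{m(1-λ)}) ≤ λ^α h(x) + m(1-λ^α) h(y)` for all `x, y ∈ [0,c]`, `λ ∈ [0,1]`. -/
def GAConvexOn (α m c : ℝ) (h : ℝ → ℝ) : Prop :=
  ∀ x ∈ Icc (0:ℝ) c, ∀ y ∈ Icc (0:ℝ) c, ∀ l ∈ Icc (0:ℝ) 1,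
    h (x ^ l * y ^ (m * (1 - l))) ≤ l ^ α * h x + m * (1 - l ^ α) * h y

/-- A function `h` is `(α,m)`-GA-concave on `[0,c]` if
`h(x^λ y^{m(1-λ)}) ≥ λ^α h(x) + m(1-λ^α) h(y)` for all `x, y ∈ [0,c]`, `λ ∈ [0,1]`. -/
def GAConcaveOn (α m c : ℝ) (h : ℝ → ℝ) : Prop :=
  ∀ x ∈ Icc (0:ℝ) c, ∀ y ∈ Icc (0:ℝ) c, ∀ l ∈ Icc (0:ℝ) 1,
    l ^ α * h x + m * (1 - l ^ α) * h y ≤ h (x ^ l * y ^ (m * (1 - l)))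

/-!
The substitution `x = a ^ (1 - t) * b ^ t = exp ((log b - log a) * t + log a)` has
`dx = (log b - log a) * x dt`. One factor `x` of the weight
`a ^ (3 * (1 - t)) * b ^ (3 * t) = x ^ 3` is therefore absorbed by `dx`, and the right-hand side is
half the integral of `x ^ 2 * f' x` over `[a, b]`, which is computed by parts.
-/

section GeometricPath

variable {E : Type*} [NormedAddCommGroup E] [NormedSpace ℝ E] {a b : ℝ}

theorem rpow_one_sub_mul_rpow_eq_exp (ha : 0 < a) (hb : 0 < b) (t : ℝ) :
    a ^ (1 - t) * b ^ t = exp ((log b - log a) * t + log a) := by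
  rw [rpow_def_of_pos ha, rpow_def_of_pos hb, ← exp_add]
  ring_nf

theorem rpow_mul_one_sub_mul_rpow_mul_eq_rpow (ha : 0 ≤ a) (hb : 0 ≤ b) (s t : ℝ) :
    a ^ (s * (1 - t)) * b ^ (s * t) = (a ^ (1 - t) * b ^ t) ^ s := by
  rw [mul_rpow (rpow_nonneg ha _) (rpow_nonneg hb _), ← rpow_mul ha, ← rpow_mul hb,
    mul_comm s, mul_comm s]

theorem intervalIntegral_comp_exp (g : ℝ → E) (u v : ℝ) :
    ∫ s in u..v, exp s • g (exp s) = ∫ x in exp u..exp v, g x :=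
  intervalIntegral.integral_deriv_smul_comp_of_deriv_nonneg continuous_exp.continuousOn
    (fun s _ ↦ hasDerivAt_exp s) fun s _ ↦ (exp_pos s).le

theorem log_sub_log_smul_integral_comp_rpow_mul_rpow (ha : 0 < a) (hb : 0 < b) (g : ℝ → E) :
    (log b - log a) • ∫ t in (0 : ℝ)..1, (a ^ (1 - t) * b ^ t) • g (a ^ (1 - t) * b ^ t) =
      ∫ x in a..b, g x := by
  simp only [rpow_one_sub_mul_rpow_eq_exp ha hb]
  rw [intervalIntegral.smul_integral_comp_mul_add (fun s ↦ exp s • g (exp s)),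
    intervalIntegral_comp_exp]
  simp [exp_log ha, exp_log hb]

theorem log_sub_log_smul_integral_rpow_smul_comp (ha : 0 < a) (hb : 0 < b) (r : ℝ) (g : ℝ → E) :
    (log b - log a) • ∫ t in (0 : ℝ)..1,
        (a ^ ((r + 1) * (1 - t)) * b ^ ((r + 1) * t)) • g (a ^ (1 - t) * b ^ t) =
      ∫ x in a..b, x ^ r • g x := by
  rw [← log_sub_log_smul_integral_comp_rpow_mul_rpow ha hb (fun x ↦ x ^ r • g x)]
  refine congrArg _ (intervalIntegral.integral_congr fun t _ ↦ ?_)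
  have hpos : 0 < a ^ (1 - t) * b ^ t := mul_pos (rpow_pos_of_pos ha _) (rpow_pos_of_pos hb _)
  rw [rpow_mul_one_sub_mul_rpow_mul_eq_rpow ha.le hb.le, rpow_add_one hpos.ne', smul_smul,
    mul_comm (_ ^ r)]

end GeometricPath

section IntegrationByParts

variable {E : Type*} [NormedAddCommGroup E] [NormedSpace ℝ E] [CompleteSpace E]
  {f f' : ℝ → E} {a b : ℝ}

theorem integral_rpow_smul_deriv_eq (r : ℝ) (ha : 0 < a) (hb : 0 < b)
    (hf : ContinuousOn f (uIcc a b))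
    (hf' : ∀ x ∈ Ioo (min a b) (max a b), HasDerivWithinAt f (f' x) (Ioi x) x)
    (hint : IntervalIntegrable f' volume a b) :
    ∫ x in a..b, x ^ r • f' x =
      b ^ r • f b - a ^ r • f a - r • ∫ x in a..b, x ^ (r - 1) • f x := by
  have hne : ∀ x ∈ uIcc a b, x ≠ 0 := fun x hx ↦ ((lt_min ha hb).trans_le hx.1).ne'
  have hcont (p : ℝ) : ContinuousOn (fun x : ℝ ↦ x ^ p) (uIcc a b) :=
    continuousOn_id.rpow_const fun x hx ↦ Or.inl (hne x hx)
  have hderiv : ∀ x ∈ Ioo (min a b) (max a b),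
      HasDerivWithinAt (fun x : ℝ ↦ x ^ r) (r * x ^ (r - 1)) (Ioi x) x := fun x hx ↦
    (hasDerivAt_rpow_const (Or.inl (hne x (Ioo_subset_Icc_self hx)))).hasDerivWithinAt
  rw [intervalIntegral.integral_smul_deriv_eq_deriv_smul_of_hasDeriv_right (hcont r) hf hderiv hf'
    ((hcont (r - 1)).intervalIntegrable.const_mul r) hint]
  simp only [mul_smul, intervalIntegral.integral_smul]

theorem stmt_0_general (r : ℝ) (ha : 0 < a) (hb : 0 < b) (hf : ContinuousOn f (uIcc a b))
    (hf' : ∀ x ∈ Ioo (min a b) (max a b), HasDerivWithinAt f (f' x) (Ioi x) x)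
    (hint : IntervalIntegrable f' volume a b) :
    b ^ r • f b - a ^ r • f a - r • ∫ x in a..b, x ^ (r - 1) • f x =
      (log b - log a) • ∫ t in (0 : ℝ)..1,
        (a ^ ((r + 1) * (1 - t)) * b ^ ((r + 1) * t)) • f' (a ^ (1 - t) * b ^ t) := by
  rw [log_sub_log_smul_integral_rpow_smul_comp ha hb,
    integral_rpow_smul_deriv_eq r ha hb hf hf' hint]

end IntegrationByParts

theorem stmt_0 (I : Set ℝ) (f f' : ℝ → ℝ) (a b : ℝ)
    (hI : I ⊆ Set.Ioi (0:ℝ)) (hIconv : Convex ℝ I)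
    (haI : a ∈ I) (hbI : b ∈ I) (ha : 0 < a) (hab : a < b)
    (hderiv : ∀ x ∈ I, HasDerivWithinAt f (f' x) I x)
    (hint : IntervalIntegrable f' volume a b) :
    (b ^ 2 * f b - a ^ 2 * f a) / 2 - ∫ x in a..b, x * f x =
      ((Real.log b - Real.log a) / 2) *
        ∫ t in (0:ℝ)..1, a ^ (3 * (1 - t)) * b ^ (3 * t) * f' (a ^ (1 - t) * b ^ t) := by
  have hsub : uIcc a b ⊆ I := hIconv.ordConnected.uIcc_subset haI hbI
  have hf : ∀ x ∈ uIcc a b, HasDerivWithinAt f (f' x) (uIcc a b) x := fun x hx ↦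
    (hderiv x (hsub hx)).mono hsub
  have h := stmt_0_general 2 ha (ha.trans hab) (fun x hx ↦ (hf x hx).continuousWithinAt)
    (fun x hx ↦ ((hf x (Ioo_subset_Icc_self hx)).hasDerivAt
      (Icc_mem_nhds hx.1 hx.2)).hasDerivWithinAt) hint
  have hsub_one : (2 : ℝ) - 1 = 1 := by norm_num
  simp only [hsub_one, two_add_one_eq_three, rpow_two, rpow_one, smul_eq_mul] at h
  linarith
end

section
/- Let f : [0,∞) → ℝ be differentiable with f' Lebesgue integrable on [a,b], where 0 < a < b < ∞. Let (α,m) ∈ (0,1]² and q ≥ 1. If |f'|^q is (α,m)-GA-convex on [0, max{a^{1/m}, b}], then |(b²·f(b) − a²·f(a))/2 − ∫_a^b x·f(x) dx| ≤ ((ln b − ln a)/2) · [L(a³,b³)]^{1−1/q} · { m·[L(a³,b³) − G(α,3)]·|f'(a^{1/m})|^q + G(α,3)·|f'(b)|^q }^{1/q}. -/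
open Real MeasureTheory Set

/-!
Along the geometric segment `γ t = a ^ (1 - t) * b ^ t` one has `γ' = (log b - log a) * γ`, so
integrating by parts and substituting `x = γ t` gives, for every exponent `p`,
`b ^ p * f b - a ^ p * f a - p * ∫ x in a..b, x ^ (p - 1) * f x =
  (log b - log a) * ∫ t in 0..1, γ t ^ (p + 1) * f' (γ t)`.
Hölder's inequality with weight `γ ^ (p + 1)` reduces the claim to a bound on
`∫ t in 0..1, γ t ^ (p + 1) * |f' (γ t)| ^ q`. Since `γ t = b ^ t * (a ^ (1 / m)) ^ (m * (1 - t))`,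
convexity bounds `|f' (γ t)| ^ q` by a linear combination of `1` and `t ^ α`, whose integrals
against the weight are `L (a ^ (p + 1)) (b ^ (p + 1))` and `G a b α (p + 1)`. The same bound makes
`f' ∘ γ` integrable, which justifies the integration by parts.
-/

section WeightedHolder

variable {X : Type*} [MeasurableSpace X] {μ : Measure X}

theorem integral_rpow_mul_rpow_le {u v : X → ℝ} {r s : ℝ} (hr : 0 ≤ r) (hs : 0 ≤ s)
    (hrs : r + s = 1) (hu : Integrable u μ) (hv : Integrable v μ)
    (hu_nonneg : 0 ≤ᵐ[μ] u) (hv_nonneg : 0 ≤ᵐ[μ] v) :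
    ∫ x, u x ^ r * v x ^ s ∂μ ≤ (∫ x, u x ∂μ) ^ r * (∫ x, v x ∂μ) ^ s := by
  have hprod_nonneg : 0 ≤ᵐ[μ] fun x => u x ^ r * v x ^ s := by
    filter_upwards [hu_nonneg, hv_nonneg] with x hux hvx
    exact mul_nonneg (rpow_nonneg hux r) (rpow_nonneg hvx s)
  have hprod_meas : AEStronglyMeasurable (fun x => u x ^ r * v x ^ s) μ :=
    ((hu.aemeasurable.pow_const r).mul (hv.aemeasurable.pow_const s)).aestronglyMeasurable
  have hprod : ∫⁻ x, ENNReal.ofReal (u x ^ r * v x ^ s) ∂μ =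
      ∫⁻ x, ENNReal.ofReal (u x) ^ r * ENNReal.ofReal (v x) ^ s ∂μ := by
    refine lintegral_congr_ae ?_
    filter_upwards [hu_nonneg, hv_nonneg] with x hux hvx
    rw [ENNReal.ofReal_mul (rpow_nonneg hux r), ENNReal.ofReal_rpow_of_nonneg hux hr,
      ENNReal.ofReal_rpow_of_nonneg hvx hs]
  rw [integral_eq_lintegral_of_nonneg_ae hprod_nonneg hprod_meas,
    integral_eq_lintegral_of_nonneg_ae hu_nonneg hu.aestronglyMeasurable,
    integral_eq_lintegral_of_nonneg_ae hv_nonneg hv.aestronglyMeasurable, hprod,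
    ENNReal.toReal_rpow, ENNReal.toReal_rpow, ← ENNReal.toReal_mul]
  refine ENNReal.toReal_mono (ENNReal.mul_ne_top ?_ ?_)
    (ENNReal.lintegral_mul_norm_pow_le hu.aemeasurable.ennreal_ofReal
      hv.aemeasurable.ennreal_ofReal hr hs hrs)
  · exact ENNReal.rpow_ne_top_of_nonneg hr hu.lintegral_lt_top.ne
  · exact ENNReal.rpow_ne_top_of_nonneg hs hv.lintegral_lt_top.ne

theorem integral_mul_le_weight_mul_Lp_of_nonneg {w g : X → ℝ} {q : ℝ} (hq : 1 ≤ q)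
    (hw : Integrable w μ) (hwg : Integrable (fun x => w x * g x ^ q) μ)
    (hw_nonneg : 0 ≤ᵐ[μ] w) (hg_nonneg : 0 ≤ᵐ[μ] g) :
    ∫ x, w x * g x ∂μ ≤ (∫ x, w x ∂μ) ^ (1 - 1 / q) * (∫ x, w x * g x ^ q ∂μ) ^ (1 / q) := by
  have hq_pos : 0 < q := zero_lt_one.trans_le hq
  have hq_compl : 0 ≤ 1 - 1 / q := sub_nonneg.2 ((div_le_one hq_pos).2 hq)
  have hsplit : ∫ x, w x * g x ∂μ =
      ∫ x, w x ^ (1 - 1 / q) * (w x * g x ^ q) ^ (1 / q) ∂μ := by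
    refine integral_congr_ae ?_
    filter_upwards [hw_nonneg, hg_nonneg] with x hwx hgx
    rw [mul_rpow hwx (rpow_nonneg hgx q), ← mul_assoc,
      ← rpow_add_of_nonneg hwx hq_compl (by positivity), sub_add_cancel, rpow_one,
      ← rpow_mul hgx, mul_one_div_cancel hq_pos.ne', rpow_one]
  rw [hsplit]
  refine integral_rpow_mul_rpow_le hq_compl (by positivity) (sub_add_cancel 1 (1 / q)) hw hwg
    hw_nonneg ?_
  filter_upwards [hw_nonneg, hg_nonneg] with x hwx hgx
  exact mul_nonneg hwx (rpow_nonneg hgx q)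

end WeightedHolder

/-- The geometric segment from `a` (at `t = 0`) to `b` (at `t = 1`): the weighted geometric mean
of `a` and `b`, used as a parametrization of `[a, b]`. -/
noncomputable def geomSegment (a b t : ℝ) : ℝ := a ^ (1 - t) * b ^ t

section GeomSegment

variable {a b t : ℝ}

@[simp]
theorem geomSegment_zero (a b : ℝ) : geomSegment a b 0 = a := by simp [geomSegment]

@[simp]
theorem geomSegment_one (a b : ℝ) : geomSegment a b 1 = b := by simp [geomSegment]

theorem geomSegment_pos (ha : 0 < a) (hb : 0 < b) (t : ℝ) : 0 < geomSegment a b t :=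
  mul_pos (rpow_pos_of_pos ha _) (rpow_pos_of_pos hb _)

theorem geomSegment_rpow (ha : 0 ≤ a) (hb : 0 ≤ b) (t r : ℝ) :
    geomSegment a b t ^ r = geomSegment (a ^ r) (b ^ r) t := by
  rw [geomSegment, geomSegment, mul_rpow (rpow_nonneg ha _) (rpow_nonneg hb _),
    ← rpow_mul ha, ← rpow_mul ha, ← rpow_mul hb, ← rpow_mul hb, mul_comm r, mul_comm r]

theorem hasDerivAt_geomSegment (ha : 0 < a) (hb : 0 < b) (t : ℝ) :
    HasDerivAt (geomSegment a b) ((log b - log a) * geomSegment a b t) t := by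
  have hleft := ((hasDerivAt_id t).const_sub 1).const_rpow ha
  have hright := (hasDerivAt_id t).const_rpow hb
  refine (hleft.mul hright).congr_deriv ?_
  simp only [geomSegment, id_eq]
  ring

theorem continuous_geomSegment (ha : 0 < a) (hb : 0 < b) : Continuous (geomSegment a b) :=
  continuous_iff_continuousAt.2 fun t => (hasDerivAt_geomSegment ha hb t).continuousAt

theorem continuous_geomSegment_rpow (ha : 0 < a) (hb : 0 < b) (r : ℝ) :
    Continuous fun t => geomSegment a b t ^ r :=
  (continuous_geomSegment ha hb).rpow_const fun t => .inl (geomSegment_pos ha hb t).ne'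

theorem geomSegment_mem_Icc (ha : 0 < a) (hab : a ≤ b) (ht : t ∈ Icc (0 : ℝ) 1) :
    geomSegment a b t ∈ Icc a b := by
  have hmono : Monotone (geomSegment a b) :=
    monotone_of_hasDerivAt_nonneg (hasDerivAt_geomSegment ha (ha.trans_le hab)) fun t =>
      mul_nonneg (sub_nonneg.2 (log_le_log ha hab)) (geomSegment_pos ha (ha.trans_le hab) t).le
  exact ⟨by simpa using hmono ht.1, by simpa using hmono ht.2⟩

theorem integral_geomSegment (ha : 0 < a) (hb : 0 < b) (hab : a ≠ b) :
    ∫ t in (0 : ℝ)..1, geomSegment a b t = L a b := by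
  have hlog : log b - log a ≠ 0 :=
    sub_ne_zero.2 fun h => hab (log_injOn_pos ha hb h.symm)
  have hftc := intervalIntegral.integral_eq_sub_of_hasDerivAt
    (fun t _ => hasDerivAt_geomSegment ha hb t)
    (((continuous_geomSegment ha hb).const_mul (log b - log a)).intervalIntegrable 0 1)
  rw [intervalIntegral.integral_const_mul, geomSegment_zero, geomSegment_one] at hftc
  rw [L, eq_div_iff hlog, mul_comm, hftc]

theorem integral_geomSegment_rpow (ha : 0 < a) (hb : 0 < b) (hab : a ≠ b) {r : ℝ} (hr : r ≠ 0) :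
    ∫ t in (0 : ℝ)..1, geomSegment a b t ^ r = L (a ^ r) (b ^ r) := by
  simp_rw [geomSegment_rpow ha.le hb.le]
  exact integral_geomSegment (rpow_pos_of_pos ha r) (rpow_pos_of_pos hb r)
    ((rpow_left_inj ha.le hb.le hr).not.2 hab)

theorem integral_geomSegment_rpow_mul_rpow (ha : 0 ≤ a) (hb : 0 ≤ b) (α r : ℝ) :
    ∫ t in (0 : ℝ)..1, geomSegment a b t ^ r * t ^ α = G a b α r := by
  refine intervalIntegral.integral_congr fun t _ => ?_
  simp only [geomSegment_rpow ha hb t r]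
  rw [geomSegment, rpow_mul ha, rpow_mul hb, mul_comm _ (t ^ α), mul_assoc]

theorem GAConvexOn.apply_geomSegment_le {α m c : ℝ} {h : ℝ → ℝ} (hh : GAConvexOn α m c h)
    (hm : m ≠ 0) (ha : 0 ≤ a) (hac : a ^ (1 / m) ≤ c) (hb : b ∈ Icc 0 c)
    (ht : t ∈ Icc (0 : ℝ) 1) :
    h (geomSegment a b t) ≤ t ^ α * h b + m * (1 - t ^ α) * h (a ^ (1 / m)) := by
  have hseg : geomSegment a b t = b ^ t * (a ^ (1 / m)) ^ (m * (1 - t)) := by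
    rw [← rpow_mul ha, ← mul_assoc, one_div_mul_cancel hm, one_mul, mul_comm, geomSegment]
  rw [hseg]
  exact hh b hb (a ^ (1 / m)) ⟨rpow_nonneg ha _, hac⟩ t ht

end GeomSegment

section IntegralEstimates

variable {f f' g : ℝ → ℝ} {a b : ℝ}

theorem aestronglyMeasurable_comp_geomSegment (ha : 0 < a) (hab : a ≤ b)
    (hf : ∀ x ∈ Icc a b, HasDerivAt f (f' x) x) :
    AEStronglyMeasurable (fun t => f' (geomSegment a b t)) (volume.restrict (Ioc 0 1)) := by
  have hmeas : Measurable fun t => deriv f (geomSegment a b t) :=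
    (measurable_deriv f).comp (continuous_geomSegment ha (ha.trans_le hab)).measurable
  refine hmeas.aestronglyMeasurable.congr ?_
  filter_upwards [ae_restrict_mem measurableSet_Ioc] with t ht
  exact (hf _ (geomSegment_mem_Icc ha hab (Ioc_subset_Icc_self ht))).deriv

theorem integral_comp_geomSegment_mul (ha : 0 < a) (hab : a ≤ b) (hg : ContinuousOn g (Icc a b)) :
    ∫ t in (0 : ℝ)..1, g (geomSegment a b t) * ((log b - log a) * geomSegment a b t) =
      ∫ x in a..b, g x := by
  have hb : 0 < b := ha.trans_le hab
  have himage : geomSegment a b '' uIcc 0 1 ⊆ Icc a b := by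
    rw [uIcc_of_le (zero_le_one' ℝ), image_subset_iff]
    exact fun t ht => geomSegment_mem_Icc ha hab ht
  simpa only [Function.comp_apply, geomSegment_zero, geomSegment_one] using
    intervalIntegral.integral_comp_mul_deriv' (fun t _ => hasDerivAt_geomSegment ha hb t)
      ((continuous_geomSegment ha hb).const_mul _).continuousOn (hg.mono himage)

theorem integral_geomSegment_rpow_mul_deriv (ha : 0 < a) (hab : a ≤ b)
    (hf : ∀ x ∈ Icc a b, HasDerivAt f (f' x) x)
    (hint : IntervalIntegrable (fun t => f' (geomSegment a b t)) volume 0 1) (p : ℝ) :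
    (log b - log a) * ∫ t in (0 : ℝ)..1, geomSegment a b t ^ (p + 1) * f' (geomSegment a b t) =
      b ^ p * f b - a ^ p * f a - p * ∫ x in a..b, x ^ (p - 1) * f x := by
  have hb : 0 < b := ha.trans_le hab
  set γ := geomSegment a b with hγ
  set Λ := log b - log a
  have hγ_ne : ∀ t, γ t ≠ 0 := fun t => (geomSegment_pos ha hb t).ne'
  have hγ_deriv : ∀ t, HasDerivAt γ (Λ * γ t) t := hasDerivAt_geomSegment ha hb
  have hγ_cont : Continuous fun t => Λ * γ t := (continuous_geomSegment ha hb).const_mul Λ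
  have hf_deriv : ∀ t ∈ uIcc (0 : ℝ) 1, HasDerivAt (f ∘ γ) (f' (γ t) * (Λ * γ t)) t :=
    fun t ht => (hf _ (geomSegment_mem_Icc ha hab
      (uIcc_of_le (zero_le_one' ℝ) ▸ ht))).comp t (hγ_deriv t)
  have hparts := intervalIntegral.integral_mul_deriv_eq_deriv_mul
    (fun t _ => (hγ_deriv t).rpow_const (p := p) (.inl (hγ_ne t))) hf_deriv
    (((hγ_cont.mul_const p).mul
      (continuous_geomSegment_rpow ha hb (p - 1))).intervalIntegrable 0 1)
    (hint.mul_continuousOn hγ_cont.continuousOn)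
  have hsubst := integral_comp_geomSegment_mul ha hab (g := fun x => x ^ (p - 1) * f x)
    fun x hx => ((continuousAt_rpow_const x (p - 1) (.inl (ha.trans_le hx.1).ne')).mul
      (hf x hx).continuousAt).continuousWithinAt
  simp only [Function.comp_apply, hγ, geomSegment_zero, geomSegment_one] at hparts
  rw [← hsubst, ← intervalIntegral.integral_const_mul, ← intervalIntegral.integral_const_mul]
  convert hparts using 3 with t
  · rw [rpow_add_one (hγ_ne t)]
    ring
  · ext t
    ring

theorem intervalIntegrable_of_abs_rpow {q : ℝ} (hq : 1 ≤ q) (hab : a ≤ b)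
    (hmeas : AEStronglyMeasurable g (volume.restrict (Ioc a b)))
    (hint : IntervalIntegrable (fun t => |g t| ^ q) volume a b) :
    IntervalIntegrable g volume a b := by
  rw [intervalIntegrable_iff_integrableOn_Ioc_of_le hab] at hint ⊢
  have habs : Integrable (fun t => ‖g t‖ ^ (1 : ℝ)) (volume.restrict (Ioc a b)) :=
    integrable_norm_rpow_of_le hmeas zero_le_one (zero_le_one.trans hq) hq hint
  simp only [rpow_one] at habs
  exact (integrable_norm_iff hmeas).1 habs

variable {A B α m q r : ℝ}

theorem intervalIntegrable_rpow_combination (hα : -1 < α) (A B m : ℝ) :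
    IntervalIntegrable (fun t => t ^ α * B + m * (1 - t ^ α) * A) volume 0 1 := by
  have hpow : IntervalIntegrable (fun t : ℝ => t ^ α) volume 0 1 :=
    intervalIntegral.intervalIntegrable_rpow' hα
  exact (hpow.mul_const B).add (((intervalIntegrable_const.sub hpow).const_mul m).mul_const A)

theorem intervalIntegrable_abs_rpow_of_le_combination (hα : -1 < α)
    (hmeas : AEStronglyMeasurable g (volume.restrict (Ioc 0 1)))
    (hg : ∀ t ∈ Icc (0 : ℝ) 1, |g t| ^ q ≤ t ^ α * B + m * (1 - t ^ α) * A) :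
    IntervalIntegrable (fun t => |g t| ^ q) volume 0 1 := by
  rw [← uIoc_of_le (zero_le_one' ℝ)] at hmeas
  refine (intervalIntegrable_rpow_combination hα A B m).mono_fun'
    (hmeas.norm.aemeasurable.pow_const q).aestronglyMeasurable ?_
  rw [uIoc_of_le (zero_le_one' ℝ)]
  filter_upwards [ae_restrict_mem measurableSet_Ioc] with t ht
  rw [norm_of_nonneg (rpow_nonneg (abs_nonneg _) q)]
  exact hg t (Ioc_subset_Icc_self ht)

theorem integral_geomSegment_rpow_mul_combination (ha : 0 < a) (hb : 0 < b) (hab : a ≠ b)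
    (hα : -1 < α) (hr : r ≠ 0) (A B m : ℝ) :
    ∫ t in (0 : ℝ)..1, geomSegment a b t ^ r * (t ^ α * B + m * (1 - t ^ α) * A) =
      m * (L (a ^ r) (b ^ r) - G a b α r) * A + G a b α r * B := by
  have hweight : Continuous fun t => geomSegment a b t ^ r := continuous_geomSegment_rpow ha hb r
  have hpow : IntervalIntegrable (fun t => geomSegment a b t ^ r * t ^ α) volume 0 1 :=
    (intervalIntegral.intervalIntegrable_rpow' hα).continuousOn_mul hweight.continuousOn
  calc ∫ t in (0 : ℝ)..1, geomSegment a b t ^ r * (t ^ α * B + m * (1 - t ^ α) * A)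
      = ∫ t in (0 : ℝ)..1, ((B - m * A) * (geomSegment a b t ^ r * t ^ α) +
          m * A * geomSegment a b t ^ r) := by congr 1; ext t; ring
    _ = (B - m * A) * G a b α r + m * A * L (a ^ r) (b ^ r) := by
      rw [intervalIntegral.integral_add (hpow.const_mul _)
          ((hweight.intervalIntegrable 0 1).const_mul _),
        intervalIntegral.integral_const_mul, intervalIntegral.integral_const_mul,
        integral_geomSegment_rpow_mul_rpow ha.le hb.le, integral_geomSegment_rpow ha hb hab hr]
    _ = m * (L (a ^ r) (b ^ r) - G a b α r) * A + G a b α r * B := by ring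

theorem abs_integral_geomSegment_rpow_mul_le (ha : 0 < a) (hb : 0 < b) (hab : a ≠ b)
    (hα : -1 < α) (hr : r ≠ 0) (hq : 1 ≤ q)
    (hint : IntervalIntegrable (fun t => |g t| ^ q) volume 0 1)
    (hg : ∀ t ∈ Icc (0 : ℝ) 1, |g t| ^ q ≤ t ^ α * B + m * (1 - t ^ α) * A) :
    |∫ t in (0 : ℝ)..1, geomSegment a b t ^ r * g t| ≤
      L (a ^ r) (b ^ r) ^ (1 - 1 / q) *
        (m * (L (a ^ r) (b ^ r) - G a b α r) * A + G a b α r * B) ^ (1 / q) := by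
  have hweight : Continuous fun t => geomSegment a b t ^ r := continuous_geomSegment_rpow ha hb r
  have hweight_nonneg : ∀ t, 0 ≤ geomSegment a b t ^ r := fun t =>
    rpow_nonneg (geomSegment_pos ha hb t).le r
  have hint_weight : IntervalIntegrable (fun t => geomSegment a b t ^ r * |g t| ^ q) volume 0 1 :=
    hint.continuousOn_mul hweight.continuousOn
  have hholder := integral_mul_le_weight_mul_Lp_of_nonneg hq
    (hweight.intervalIntegrable 0 1).1 hint_weight.1
    (.of_forall hweight_nonneg) (.of_forall fun t => abs_nonneg (g t))
  have hconvex : ∫ t in (0 : ℝ)..1, geomSegment a b t ^ r * |g t| ^ q ≤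
      m * (L (a ^ r) (b ^ r) - G a b α r) * A + G a b α r * B := by
    rw [← integral_geomSegment_rpow_mul_combination ha hb hab hα hr A B m]
    exact intervalIntegral.integral_mono_on zero_le_one hint_weight
      ((intervalIntegrable_rpow_combination hα A B m).continuousOn_mul hweight.continuousOn)
      fun t ht => mul_le_mul_of_nonneg_left (hg t ht) (hweight_nonneg t)
  simp only [← intervalIntegral.integral_of_le (zero_le_one' ℝ)] at hholder
  have habs : |∫ t in (0 : ℝ)..1, geomSegment a b t ^ r * g t| ≤
      ∫ t in (0 : ℝ)..1, geomSegment a b t ^ r * |g t| := by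
    simpa only [abs_mul, abs_of_nonneg (hweight_nonneg _)] using
      intervalIntegral.abs_integral_le_integral_abs (f := fun t => geomSegment a b t ^ r * g t)
        (μ := volume) (zero_le_one' ℝ)
  rw [integral_geomSegment_rpow ha hb hab hr] at hholder
  refine (habs.trans hholder).trans (mul_le_mul_of_nonneg_left ?_ (rpow_nonneg ?_ _))
  · refine rpow_le_rpow ?_ hconvex (by positivity)
    exact intervalIntegral.integral_nonneg zero_le_one fun t _ =>
      mul_nonneg (hweight_nonneg t) (by positivity)
  · rw [← integral_geomSegment_rpow ha hb hab hr]
    exact intervalIntegral.integral_nonneg zero_le_one fun t _ => hweight_nonneg t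

end IntegralEstimates

theorem stmt_1_general {f f' : ℝ → ℝ} {a b α m p q : ℝ} (ha : 0 < a) (hab : a < b)
    (hα : -1 < α) (hm : m ≠ 0) (hp : 0 < p) (hq : 1 ≤ q)
    (hderiv : ∀ x ∈ Icc a b, HasDerivAt f (f' x) x)
    (hconv : GAConvexOn α m (max (a ^ (1 / m)) b) (fun x => |f' x| ^ q)) :
    |(b ^ p * f b - a ^ p * f a) / p - ∫ x in a..b, x ^ (p - 1) * f x| ≤
      ((log b - log a) / p) * L (a ^ (p + 1)) (b ^ (p + 1)) ^ (1 - 1 / q) *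
        (m * (L (a ^ (p + 1)) (b ^ (p + 1)) - G a b α (p + 1)) * |f' (a ^ (1 / m))| ^ q +
          G a b α (p + 1) * |f' b| ^ q) ^ (1 / q) := by
  have hb : 0 < b := ha.trans hab
  have hbound : ∀ t ∈ Icc (0 : ℝ) 1, |f' (geomSegment a b t)| ^ q ≤
      t ^ α * |f' b| ^ q + m * (1 - t ^ α) * |f' (a ^ (1 / m))| ^ q := fun t ht =>
    hconv.apply_geomSegment_le hm ha.le (le_max_left _ _) ⟨hb.le, le_max_right _ _⟩ ht
  have hmeas := aestronglyMeasurable_comp_geomSegment ha hab.le hderiv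
  have hint_rpow := intervalIntegrable_abs_rpow_of_le_combination hα hmeas hbound
  have hint := intervalIntegrable_of_abs_rpow hq zero_le_one hmeas hint_rpow
  have hidentity : (b ^ p * f b - a ^ p * f a) / p - ∫ x in a..b, x ^ (p - 1) * f x =
      (log b - log a) / p *
        ∫ t in (0 : ℝ)..1, geomSegment a b t ^ (p + 1) * f' (geomSegment a b t) := by
    rw [div_mul_eq_mul_div, integral_geomSegment_rpow_mul_deriv ha hab.le hderiv hint,
      sub_div _ (p * _), mul_div_cancel_left₀ _ hp.ne']
  have hlog : 0 ≤ (log b - log a) / p := div_nonneg (sub_nonneg.2 (log_le_log ha hab.le)) hp.le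
  rw [hidentity, abs_mul, abs_of_nonneg hlog, mul_assoc]
  gcongr
  exact abs_integral_geomSegment_rpow_mul_le ha hb hab.ne hα (by positivity) hq hint_rpow hbound

theorem stmt_1 (f f' : ℝ → ℝ) (a b α m q : ℝ) (ha : 0 < a) (hab : a < b)
    (hα : α ∈ Ioc (0:ℝ) 1) (hm : m ∈ Ioc (0:ℝ) 1) (hq : 1 ≤ q)
    (hderiv : ∀ x ∈ Ici (0:ℝ), HasDerivAt f (f' x) x)
    (hint : IntervalIntegrable f' volume a b)
    (hconv : GAConvexOn α m (max (a ^ (1/m)) b) (fun x => |f' x| ^ q)) :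
    |(b ^ 2 * f b - a ^ 2 * f a) / 2 - ∫ x in a..b, x * f x| ≤
      ((Real.log b - Real.log a) / 2) * L (a ^ 3) (b ^ 3) ^ (1 - 1/q) *
        (m * (L (a ^ 3) (b ^ 3) - G a b α 3) * |f' (a ^ (1/m))| ^ q +
          G a b α 3 * |f' b| ^ q) ^ (1/q) := by
  have h := stmt_1_general (p := 2) ha hab (by linarith [hα.1]) hm.1.ne' two_pos hq
    (fun x hx => hderiv x (ha.le.trans hx.1)) hconv
  simpa [show (2 : ℝ) - 1 = 1 by norm_num, show (2 : ℝ) + 1 = 3 by norm_num] using h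
end

section
/- Let f : [0,∞) → ℝ be differentiable with f' Lebesgue integrable on [a,b], where 0 < a < b < ∞. Let (α,m) ∈ (0,1]². If |f'| is (α,m)-GA-convex on [0, max{a^{1/m}, b}], then |(b²·f(b) − a²·f(a))/2 − ∫_a^b x·f(x) dx| ≤ ((ln b − ln a)/2) · { m·[L(a³,b³) − G(α,3)]·|f'(a^{1/m})| + G(α,3)·|f'(b)| }. -/
/-!
Integration by parts turns the left-hand side into `1/2 * ∫ x in a..b, x ^ 2 * f' x`. The
substitution `x = a^(1-t) b^t` makes this `(log b - log a) / 2` times the integral over `[0, 1]` of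
`(a^(1-t) b^t)^3 * f' (a^(1-t) b^t)`, and GA-convexity for the points `b` and `a^(1/m)` bounds
`|f' (a^(1-t) b^t)|` by `t^α |f' b| + m (1 - t^α) |f' (a^(1/m))|`. The weight `t^α` integrates to
`G a b α 3` and the weight `1` to `G a b 0 3 = L (a^3) (b^3)`.
-/

open Real MeasureTheory Set

/-- The geometric interpolation `a^(1-t) b^t` from `a` (at `t = 0`) to `b` (at `t = 1`), along which
GA-convexity is tested; `G a b α ℓ` is the integral of its `ℓ`-th power against `t ^ α`. -/
noncomputable def geomPath (a b t : ℝ) : ℝ := a ^ (1 - t) * b ^ t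

@[simp]
lemma geomPath_zero (a b : ℝ) : geomPath a b 0 = a := by simp [geomPath]

@[simp]
lemma geomPath_one (a b : ℝ) : geomPath a b 1 = b := by simp [geomPath]

section GeomPath

variable {a b : ℝ}

lemma geomPath_pos (ha : 0 < a) (hb : 0 < b) (t : ℝ) : 0 < geomPath a b t :=
  mul_pos (rpow_pos_of_pos ha _) (rpow_pos_of_pos hb _)

lemma hasDerivAt_geomPath (ha : 0 < a) (hb : 0 < b) (t : ℝ) :
    HasDerivAt (geomPath a b) ((log b - log a) * geomPath a b t) t := by
  have hda := ((hasDerivAt_id t).const_sub 1).const_rpow ha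
  have hdb := (hasDerivAt_id t).const_rpow hb
  refine (hda.mul hdb).congr_deriv ?_
  simp only [geomPath, id_eq]
  ring

lemma continuous_geomPath (ha : 0 < a) (hb : 0 < b) : Continuous (geomPath a b) :=
  continuous_iff_continuousAt.2 fun t => (hasDerivAt_geomPath ha hb t).continuousAt

lemma continuous_geomPath_rpow (ha : 0 < a) (hb : 0 < b) (p : ℝ) :
    Continuous fun t => geomPath a b t ^ p :=
  (continuous_geomPath ha hb).rpow_const fun t => Or.inl (geomPath_pos ha hb t).ne'

lemma GAConvexOn.apply_geomPath_le {α m c t : ℝ} {h : ℝ → ℝ} (hh : GAConvexOn α m c h)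
    (ha : 0 ≤ a) (hm : m ≠ 0) (hac : a ^ (1 / m) ≤ c) (hb : b ∈ Icc 0 c) (ht : t ∈ Icc (0 : ℝ) 1) :
    h (geomPath a b t) ≤ t ^ α * h b + m * (1 - t ^ α) * h (a ^ (1 / m)) := by
  have hpath : b ^ t * (a ^ (1 / m)) ^ (m * (1 - t)) = geomPath a b t := by
    rw [← rpow_mul ha, ← mul_assoc, one_div_mul_cancel hm, one_mul, mul_comm, geomPath]
  simpa only [hpath] using hh b hb _ ⟨rpow_nonneg ha _, hac⟩ t ht

lemma G_eq_integral_geomPath (ha : 0 ≤ a) (hb : 0 ≤ b) (α p : ℝ) :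
    G a b α p = ∫ t in (0 : ℝ)..1, t ^ α * geomPath a b t ^ p := by
  refine intervalIntegral.integral_congr fun t _ => ?_
  simp only [geomPath]
  rw [mul_rpow (rpow_nonneg ha _) (rpow_nonneg hb _), ← rpow_mul ha, ← rpow_mul hb,
    mul_comm (1 - t), mul_comm t, mul_assoc]

variable {E : Type*} [NormedAddCommGroup E] [NormedSpace ℝ E]

lemma integral_eq_smul_integral_geomPath (ha : 0 < a) (hb : 0 < b) (g : ℝ → E) :
    ∫ x in a..b, g x =
      (log b - log a) • ∫ t in (0 : ℝ)..1, geomPath a b t • g (geomPath a b t) := by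
  have hcont := (continuous_geomPath ha hb).continuousOn (s := uIcc 0 1)
  have hpos := geomPath_pos ha hb
  have hsubst : ∫ t in (0 : ℝ)..1, ((log b - log a) * geomPath a b t) • (g ∘ geomPath a b) t =
      ∫ x in geomPath a b 0..geomPath a b 1, g x := by
    rcases le_total a b with hab | hab
    · exact intervalIntegral.integral_deriv_smul_comp_of_deriv_nonneg hcont
        (fun t _ => hasDerivAt_geomPath ha hb t)
        fun t _ => mul_nonneg (sub_nonneg.2 (log_le_log ha hab)) (hpos t).le
    · exact intervalIntegral.integral_deriv_smul_comp_of_deriv_nonpos hcont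
        (fun t _ => hasDerivAt_geomPath ha hb t)
        fun t _ => mul_nonpos_of_nonpos_of_nonneg (sub_nonpos.2 (log_le_log hb hab)) (hpos t).le
  simpa only [geomPath_zero, geomPath_one, mul_smul, intervalIntegral.integral_smul,
    Function.comp_apply] using hsubst.symm

lemma integral_rpow_smul_eq_smul_integral_geomPath (ha : 0 < a) (hb : 0 < b) (s : ℝ) (g : ℝ → E) :
    ∫ x in a..b, x ^ s • g x =
      (log b - log a) • ∫ t in (0 : ℝ)..1, geomPath a b t ^ (s + 1) • g (geomPath a b t) := by
  rw [integral_eq_smul_integral_geomPath ha hb]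
  simp only [smul_smul, mul_comm (geomPath a b _), ← rpow_add_one (geomPath_pos ha hb _).ne']

lemma G_zero_eq_L (ha : 0 < a) (hb : 0 < b) (hab : a ≠ b) {p : ℝ} (hp : p ≠ 0) :
    G a b 0 p = L (a ^ p) (b ^ p) := by
  have hlog : log b - log a ≠ 0 := sub_ne_zero.2 fun h => hab (log_injOn_pos ha hb h.symm)
  have hpower : (b ^ p - a ^ p) / p = (log b - log a) * G a b 0 p := calc
    (b ^ p - a ^ p) / p = ∫ x in a..b, x ^ (p - 1) := by
      rw [integral_rpow (Or.inr ⟨by simpa using hp, notMem_uIcc_of_lt ha hb⟩), sub_add_cancel]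
    _ = (log b - log a) * G a b 0 p := by
      simpa [G_eq_integral_geomPath ha.le hb.le] using
        integral_rpow_smul_eq_smul_integral_geomPath ha hb (p - 1) fun _ => (1 : ℝ)
  rw [L, log_rpow ha, log_rpow hb, ← mul_sub, eq_div_iff (mul_ne_zero hp hlog)]
  linear_combination (-p) * hpower + mul_div_cancel₀ (b ^ p - a ^ p) hp

lemma norm_integral_geomPath_rpow_smul_le (ha : 0 < a) (hb : 0 < b) {α p A B : ℝ} (hα : 0 ≤ α)
    {u : ℝ → E} (hu : ∀ t ∈ Icc (0 : ℝ) 1, ‖u t‖ ≤ t ^ α * B + (1 - t ^ α) * A) :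
    ‖∫ t in (0 : ℝ)..1, geomPath a b t ^ p • u t‖ ≤
      (G a b 0 p - G a b α p) * A + G a b α p * B := by
  have hpow := continuous_geomPath_rpow ha hb p
  have hweighted : Continuous fun t : ℝ => t ^ α * geomPath a b t ^ p :=
    (continuous_rpow_const hα).mul hpow
  calc ‖∫ t in (0 : ℝ)..1, geomPath a b t ^ p • u t‖
      ≤ ∫ t in (0 : ℝ)..1,
          (geomPath a b t ^ p * A + t ^ α * geomPath a b t ^ p * (B - A)) := by
        refine intervalIntegral.norm_integral_le_of_norm_le zero_le_one (.of_forall fun t ht => ?_)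
          (((hpow.mul_const A).add (hweighted.mul_const (B - A))).intervalIntegrable _ _)
        have hnonneg : 0 ≤ geomPath a b t ^ p := rpow_nonneg (geomPath_pos ha hb t).le p
        rw [norm_smul, norm_of_nonneg hnonneg]
        linear_combination geomPath a b t ^ p * hu t (Ioc_subset_Icc_self ht)
    _ = G a b 0 p * A + G a b α p * (B - A) := by
        rw [intervalIntegral.integral_add ((hpow.mul_const A).intervalIntegrable _ _)
          ((hweighted.mul_const (B - A)).intervalIntegrable _ _)]
        simp only [intervalIntegral.integral_mul_const, G_eq_integral_geomPath ha.le hb.le,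
          rpow_zero, one_mul]
    _ = (G a b 0 p - G a b α p) * A + G a b α p * B := by ring

lemma integral_rpow_smul_deriv [CompleteSpace E] {f f' : ℝ → E} (ha : 0 < a) (hb : 0 < b) (s : ℝ)
    (hderiv : ∀ x ∈ uIcc a b, HasDerivWithinAt f (f' x) (uIcc a b) x)
    (hint : IntervalIntegrable f' volume a b) :
    ∫ x in a..b, x ^ s • f' x = b ^ s • f b - a ^ s • f a - s • ∫ x in a..b, x ^ (s - 1) • f x := by
  have hne : ∀ x ∈ uIcc a b, x ≠ 0 := fun x hx => ((lt_min ha hb).trans_le hx.1).ne'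
  have hpow : ∀ x ∈ uIcc a b, HasDerivWithinAt (· ^ s) (s * x ^ (s - 1)) (uIcc a b) x :=
    fun x hx => (hasDerivAt_rpow_const (Or.inl (hne x hx))).hasDerivWithinAt
  have hpow_int : IntervalIntegrable (fun x => s * x ^ (s - 1)) volume a b :=
    (intervalIntegral.intervalIntegrable_rpow (Or.inr (notMem_uIcc_of_lt ha hb))).const_mul s
  rw [intervalIntegral.integral_smul_deriv_eq_deriv_smul_of_hasDerivWithinAt hpow hderiv
    hpow_int hint]
  simp only [mul_smul, intervalIntegral.integral_smul]

end GeomPath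

theorem stmt_2_general {E : Type*} [NormedAddCommGroup E] [NormedSpace ℝ E] [CompleteSpace E]
    {f f' : ℝ → E} {a b α m s : ℝ} (ha : 0 < a) (hab : a < b) (hα : 0 ≤ α) (hm : m ≠ 0)
    (hs : s + 1 ≠ 0) (hderiv : ∀ x ∈ Icc a b, HasDerivWithinAt f (f' x) (Icc a b) x)
    (hint : IntervalIntegrable f' volume a b)
    (hconv : GAConvexOn α m (max (a ^ (1 / m)) b) fun x => ‖f' x‖) :
    ‖b ^ s • f b - a ^ s • f a - s • ∫ x in a..b, x ^ (s - 1) • f x‖ ≤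
      (log b - log a) *
        (m * (L (a ^ (s + 1)) (b ^ (s + 1)) - G a b α (s + 1)) * ‖f' (a ^ (1 / m))‖ +
          G a b α (s + 1) * ‖f' b‖) := by
  have hb : 0 < b := ha.trans hab
  have hlog : 0 ≤ log b - log a := sub_nonneg.2 (log_le_log ha hab.le)
  have hbound : ∀ t ∈ Icc (0 : ℝ) 1, ‖f' (geomPath a b t)‖ ≤
      t ^ α * ‖f' b‖ + (1 - t ^ α) * (m * ‖f' (a ^ (1 / m))‖) := fun t ht => by
    linear_combination
      hconv.apply_geomPath_le ha.le hm (le_max_left _ _) ⟨hb.le, le_max_right _ _⟩ ht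
  rw [← uIcc_of_le hab.le] at hderiv
  rw [← integral_rpow_smul_deriv ha hb s hderiv hint,
    integral_rpow_smul_eq_smul_integral_geomPath ha hb, norm_smul, norm_of_nonneg hlog,
    ← G_zero_eq_L ha hb hab.ne hs]
  refine mul_le_mul_of_nonneg_left ?_ hlog
  linear_combination norm_integral_geomPath_rpow_smul_le ha hb (p := s + 1) hα hbound

theorem stmt_2 (f f' : ℝ → ℝ) (a b α m : ℝ) (ha : 0 < a) (hab : a < b)
    (hα : α ∈ Ioc (0:ℝ) 1) (hm : m ∈ Ioc (0:ℝ) 1)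
    (hderiv : ∀ x ∈ Ici (0:ℝ), HasDerivAt f (f' x) x)
    (hint : IntervalIntegrable f' volume a b)
    (hconv : GAConvexOn α m (max (a ^ (1/m)) b) (fun x => |f' x|)) :
    |(b ^ 2 * f b - a ^ 2 * f a) / 2 - ∫ x in a..b, x * f x| ≤
      ((Real.log b - Real.log a) / 2) *
        (m * (L (a ^ 3) (b ^ 3) - G a b α 3) * |f' (a ^ (1/m))| +
          G a b α 3 * |f' b|) := by
  have h := stmt_2_general (s := 2) ha hab hα.1.le hm.1.ne' (by norm_num)
    (fun x hx => (hderiv x (ha.le.trans hx.1)).hasDerivWithinAt) hint hconv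
  simp only [(by norm_num : (2 : ℝ) + 1 = 3), (by norm_num : (2 : ℝ) - 1 = 1), rpow_one,
    rpow_ofNat, smul_eq_mul, norm_eq_abs, abs_le] at h ⊢
  constructor <;> linarith
end

section
/- Let f : [0,∞) → ℝ be differentiable with f' Lebesgue integrable on [a,b], where 0 < a < b < ∞. Let m ∈ (0,1] and q ≥ 1. If |f'|^q is (1,m)-GA-convex on [0, max{a^{1/m}, b}], then |(b²·f(b) − a²·f(a))/2 − ∫_a^b x·f(x) dx| ≤ ((b³ − a³)^{1−1/q}/6) · { m·[L(a³,b³) − a³]·|f'(a^{1/m})|^q + [b³ − L(a³,b³)]·|f'(b)|^q }^{1/q}. -/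
open Real MeasureTheory Set

/-!
Integration by parts against `x ^ (n + 1)` turns the left-hand side into a multiple of
`∫ x ^ (n + 1) * f' x`, and the power mean inequality for the measure `x ^ (n + 1) dx` bounds this
by the corresponding integral of `|f' x| ^ q`. Writing `x = b ^ t * (a ^ (1 / m)) ^ (m * (1 - t))`
on the logarithmic scale, GA-convexity bounds `|f' x| ^ q` by a combination of its values at `b`
and `a ^ (1 / m)` with coefficients `t` and `m * (1 - t)`; the integrals of `x ^ (n + 1) * t` and
`x ^ (n + 1) * (1 - t)` are where the logarithmic mean comes from. The same bound makes `f'`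
integrable, since a derivative is measurable.
-/

section PowerMean

variable {X E : Type*} [MeasurableSpace X] {μ : Measure X} [NormedAddCommGroup E] {u : X → E}
  {q : ℝ}

lemma memLp_ofReal_of_integrable_norm_rpow (hq : 0 < q) (hu : AEStronglyMeasurable u μ)
    (hint : Integrable (fun x => ‖u x‖ ^ q) μ) : MemLp u (ENNReal.ofReal q) μ := by
  rw [← integrable_norm_rpow_iff hu (by simpa using hq) ENNReal.ofReal_ne_top,
    ENNReal.toReal_ofReal hq.le]
  exact hint

lemma integral_norm_le_measureReal_univ_rpow_mul [IsFiniteMeasure μ] (hq : 1 ≤ q)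
    (hu : MemLp u (ENNReal.ofReal q) μ) :
    ∫ x, ‖u x‖ ∂μ ≤ μ.real univ ^ (1 - 1 / q) * (∫ x, ‖u x‖ ^ q ∂μ) ^ (1 / q) := by
  have hq0 : 0 < q := by linarith
  have hle := ENNReal.toReal_mono
    (ENNReal.mul_ne_top hu.eLpNorm_ne_top
      (ENNReal.rpow_ne_top_of_nonneg (by simpa [hq0.le] using inv_le_one_of_one_le₀ hq)
        (measure_ne_top μ univ)))
    (eLpNorm_le_eLpNorm_mul_rpow_measure_univ (ENNReal.one_le_ofReal.2 hq) hu.1)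
  rw [ENNReal.toReal_mul, ← ENNReal.toReal_rpow, toReal_eLpNorm hu.1, toReal_eLpNorm hu.1,
    lpNorm_one_eq_integral_norm hu.1,
    lpNorm_eq_integral_norm_rpow_toReal (by simpa using hq0) ENNReal.ofReal_ne_top hu.1,
    ENNReal.toReal_ofReal hq0.le, ENNReal.toReal_one, div_one, mul_comm] at hle
  simpa only [one_div, Measure.real] using hle

lemma integral_mul_norm_le_integral_rpow_mul {w : X → ℝ} (hq : 1 ≤ q) (hw : 0 ≤ᵐ[μ] w)
    (hw_int : Integrable w μ) (hu : AEStronglyMeasurable u μ)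
    (hwu_int : Integrable (fun x => w x * ‖u x‖ ^ q) μ) :
    ∫ x, w x * ‖u x‖ ∂μ ≤
      (∫ x, w x ∂μ) ^ (1 - 1 / q) * (∫ x, w x * ‖u x‖ ^ q ∂μ) ^ (1 / q) := by
  set ν := μ.withDensity fun x => ENNReal.ofReal (w x) with hν
  have hw_meas : AEMeasurable (fun x => ENNReal.ofReal (w x)) μ :=
    hw_int.aemeasurable.ennreal_ofReal
  have hw_top : ∀ᵐ x ∂μ, ENNReal.ofReal (w x) < ⊤ := by simp
  have hsmul (g : X → ℝ) : (fun x => (ENNReal.ofReal (w x)).toReal • g x) =ᵐ[μ]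
      fun x => w x * g x := by
    filter_upwards [hw] with x hx
    rw [ENNReal.toReal_ofReal hx, smul_eq_mul]
  have hν_integral (g : X → ℝ) : ∫ x, g x ∂ν = ∫ x, w x * g x ∂μ := by
    rw [hν, integral_withDensity_eq_integral_toReal_smul₀ hw_meas hw_top,
      integral_congr_ae (hsmul g)]
  have : IsFiniteMeasure ν := isFiniteMeasure_withDensity_ofReal hw_int.2
  have hν_univ : ν.real univ = ∫ x, w x ∂μ := by
    simpa using hν_integral fun _ => 1
  have hu_memLp : MemLp u (ENNReal.ofReal q) ν := by
    refine memLp_ofReal_of_integrable_norm_rpow (by linarith)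
      (hu.mono_ac (withDensity_absolutelyContinuous _ _)) ?_
    rw [hν, integrable_withDensity_iff_integrable_smul₀' hw_meas hw_top,
      integrable_congr (hsmul fun x => ‖u x‖ ^ q)]
    exact hwu_int
  simpa only [hν_integral, hν_univ] using integral_norm_le_measureReal_univ_rpow_mul hq hu_memLp

end PowerMean

lemma div_rpow_one_sub_mul_div_rpow {x y c : ℝ} (hx : 0 ≤ x) (hy : 0 ≤ y) (hc : 0 < c) (t : ℝ) :
    (x / c) ^ (1 - t) * (y / c) ^ t = x ^ (1 - t) * y ^ t / c := by
  rw [div_rpow hx hc.le, div_rpow hy hc.le, div_mul_div_comm, ← rpow_add hc, sub_add_cancel,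
    rpow_one]

lemma aestronglyMeasurable_of_hasDerivAt {E : Type*} [NormedAddCommGroup E] [NormedSpace ℝ E]
    [CompleteSpace E] {f f' : ℝ → E} {s : Set ℝ} (hs : MeasurableSet s)
    (hf : ∀ x ∈ s, HasDerivAt f (f' x) x) : AEStronglyMeasurable f' (volume.restrict s) :=
  (aestronglyMeasurable_deriv f _).congr <|
    (ae_restrict_mem hs).mono fun x hx => (hf x hx).deriv

lemma integral_pow_mul_norm_le_rpow_mul {E : Type*} [NormedAddCommGroup E] {u : ℝ → E}
    {a b q : ℝ} (ha : 0 ≤ a) (hab : a ≤ b) (hq : 1 ≤ q) (n : ℕ)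
    (hu : AEStronglyMeasurable u (volume.restrict (Ioc a b)))
    (hint : IntervalIntegrable (fun x => ‖u x‖ ^ q) volume a b) :
    ∫ x in a..b, x ^ n * ‖u x‖ ≤ ((b ^ (n + 1) - a ^ (n + 1)) / (n + 1)) ^ (1 - 1 / q) *
      (∫ x in a..b, x ^ n * ‖u x‖ ^ q) ^ (1 / q) := by
  have hpow_nonneg : 0 ≤ᵐ[volume.restrict (Ioc a b)] fun x => x ^ n :=
    (ae_restrict_mem measurableSet_Ioc).mono fun x hx => pow_nonneg (ha.trans hx.1.le) n
  rw [← integral_pow]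
  simp only [intervalIntegral.integral_of_le hab]
  exact integral_mul_norm_le_integral_rpow_mul hq hpow_nonneg
    (intervalIntegral.intervalIntegrable_pow n).1 hu
    (hint.continuousOn_mul (continuousOn_id.pow n)).1

lemma abs_boundary_sub_integral_pow_mul_le {f f' : ℝ → ℝ} {a b : ℝ} (ha : 0 ≤ a) (hab : a ≤ b)
    (n : ℕ) (hcont : ContinuousOn f (Icc a b)) (hderiv : ∀ x ∈ Ioo a b, HasDerivAt f (f' x) x)
    (hint : IntervalIntegrable f' volume a b) :
    |(b ^ (n + 1) * f b - a ^ (n + 1) * f a) / (n + 1) - ∫ x in a..b, x ^ n * f x| ≤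
      (∫ x in a..b, x ^ (n + 1) * |f' x|) / (n + 1) := by
  have hparts := intervalIntegral.integral_mul_deriv_eq_deriv_mul_of_hasDerivAt
    (u := fun x => x ^ (n + 1)) (u' := fun x => (n + 1) * x ^ n) (by fun_prop)
    (by rwa [uIcc_of_le hab]) (fun x _ => by simpa using hasDerivAt_pow (n + 1) x)
    (by rwa [min_eq_left hab, max_eq_right hab])
    (Continuous.intervalIntegrable (by fun_prop) a b) hint
  have hlhs : (b ^ (n + 1) * f b - a ^ (n + 1) * f a) / (n + 1) - ∫ x in a..b, x ^ n * f x =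
      (∫ x in a..b, x ^ (n + 1) * f' x) / (n + 1) := by
    simp only [mul_assoc, intervalIntegral.integral_const_mul] at hparts
    rw [hparts]
    field_simp
  rw [hlhs, abs_div, abs_of_pos (by positivity : (0 : ℝ) < n + 1)]
  gcongr
  refine (intervalIntegral.abs_integral_le_integral_abs hab).trans_eq
    (intervalIntegral.integral_congr fun x hx => ?_)
  rw [uIcc_of_le hab] at hx
  simp only [abs_mul, abs_of_nonneg (pow_nonneg (ha.trans hx.1) (n + 1))]

/-- For `0 < a < b`, the coordinate `t` of `x = b ^ t * a ^ (1 - t)` on the logarithmic scale, at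
which GA-convexity is applied; it runs from `0` at `a` to `1` at `b`. -/
noncomputable def logCoord (a b x : ℝ) : ℝ := (log x - log a) / (log b - log a)

section LogCoord

variable {a b x : ℝ}

lemma logCoord_mem_Icc (ha : 0 < a) (hx : x ∈ Icc a b) : logCoord a b x ∈ Icc (0 : ℝ) 1 := by
  have hax : log a ≤ log x := log_le_log ha hx.1
  have hxb : log x ≤ log b := log_le_log (ha.trans_le hx.1) hx.2
  exact ⟨div_nonneg (by linarith) (by linarith), div_le_one_of_le₀ (by linarith) (by linarith)⟩

lemma rpow_logCoord_mul_rpow_one_sub_logCoord (ha : 0 < a) (hab : a < b) (hx : 0 < x) :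
    b ^ logCoord a b x * a ^ (1 - logCoord a b x) = x := by
  have hlog : log b - log a ≠ 0 := (sub_pos.2 (log_lt_log ha hab)).ne'
  have hexponent : log b * logCoord a b x + log a * (1 - logCoord a b x) = log x := by
    rw [logCoord]
    field_simp
    ring
  rw [rpow_def_of_pos (ha.trans hab), rpow_def_of_pos ha, ← exp_add, hexponent, exp_log hx]

lemma continuousOn_logCoord (ha : 0 < a) : ContinuousOn (logCoord a b) (Icc a b) := by
  have hlog : ContinuousOn log (Icc a b) :=
    continuousOn_log.mono fun x hx => (ha.trans_le hx.1).ne'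
  exact (hlog.sub continuousOn_const).div_const _

lemma L_pow (a b : ℝ) (n : ℕ) :
    L (a ^ n) (b ^ n) = (b ^ n - a ^ n) / (n * (log b - log a)) := by
  rw [L, log_pow, log_pow, mul_sub]

lemma integral_pow_mul_logCoord (ha : 0 < a) (hab : a < b) (n : ℕ) :
    ∫ x in a..b, x ^ n * logCoord a b x =
      (b ^ (n + 1) - L (a ^ (n + 1)) (b ^ (n + 1))) / (n + 1) := by
  have hlog : log b - log a ≠ 0 := (sub_pos.2 (log_lt_log ha hab)).ne'
  have hpos : ∀ x ∈ uIcc a b, x ≠ 0 := fun x hx =>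
    (ha.trans_le (by simpa [hab.le] using hx.1)).ne'
  have hparts := intervalIntegral.integral_mul_deriv_eq_deriv_mul
    (u := logCoord a b) (u' := fun x => x⁻¹ / (log b - log a))
    (v := fun x => x ^ (n + 1) / (n + 1)) (v' := fun x => x ^ n)
    (fun x hx => ((hasDerivAt_log (hpos x hx)).sub_const _).div_const _)
    (fun x _ => ((hasDerivAt_pow (n + 1) x).div_const ((n : ℝ) + 1)).congr_deriv (by
      rw [Nat.cast_add_one, Nat.add_sub_cancel, mul_div_cancel_left₀ _ (by positivity)]))
    ((continuousOn_id.inv₀ hpos).div_const _).intervalIntegrable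
    (intervalIntegral.intervalIntegrable_pow n)
  have hremainder : ∫ x in a..b, x⁻¹ / (log b - log a) * (x ^ (n + 1) / (n + 1)) =
      (b ^ (n + 1) - a ^ (n + 1)) / (n + 1) / ((n + 1) * (log b - log a)) := by
    rw [← integral_pow, ← intervalIntegral.integral_div]
    refine intervalIntegral.integral_congr fun x hx => ?_
    have := hpos x hx
    simp only [pow_succ]
    field_simp
  simp only [mul_comm _ (logCoord a b _)]
  rw [hparts, hremainder, L_pow, logCoord, logCoord, sub_self, div_self hlog]
  push_cast
  field_simp
  ring

lemma integral_pow_mul_one_sub_logCoord (ha : 0 < a) (hab : a < b) (n : ℕ) :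
    ∫ x in a..b, x ^ n * (1 - logCoord a b x) =
      (L (a ^ (n + 1)) (b ^ (n + 1)) - a ^ (n + 1)) / (n + 1) := by
  have hint : IntervalIntegrable (fun x => x ^ n * logCoord a b x) volume a b := by
    refine ContinuousOn.intervalIntegrable_of_Icc hab.le ?_
    exact (continuousOn_id.pow n).mul (continuousOn_logCoord ha)
  simp only [mul_sub, mul_one]
  rw [intervalIntegral.integral_sub (intervalIntegral.intervalIntegrable_pow n) hint,
    integral_pow, integral_pow_mul_logCoord ha hab]
  ring

end LogCoord

namespace GAConvexOn

variable {α m c a b x : ℝ} {φ : ℝ → ℝ}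

lemma le_logCoord (hφ : GAConvexOn α m c φ) (hm : m ≠ 0) (ha : 0 < a) (hab : a < b)
    (hac : a ^ (1 / m) ≤ c) (hbc : b ≤ c) (hx : x ∈ Icc a b) :
    φ x ≤ logCoord a b x ^ α * φ b + m * (1 - logCoord a b x ^ α) * φ (a ^ (1 / m)) := by
  have hpoint : b ^ logCoord a b x * (a ^ (1 / m)) ^ (m * (1 - logCoord a b x)) = x := by
    rw [← rpow_mul ha.le, ← mul_assoc, one_div_mul_cancel hm, one_mul,
      rpow_logCoord_mul_rpow_one_sub_logCoord ha hab (ha.trans_le hx.1)]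
  have hle := hφ b ⟨(ha.trans hab).le, hbc⟩ (a ^ (1 / m)) ⟨by positivity, hac⟩
    (logCoord a b x) (logCoord_mem_Icc ha hx)
  rwa [hpoint] at hle

lemma intervalIntegrable (hφ : GAConvexOn α m c φ) (hα : 0 ≤ α) (hm : m ≠ 0) (ha : 0 < a)
    (hab : a < b) (hac : a ^ (1 / m) ≤ c) (hbc : b ≤ c) (hφ_nonneg : ∀ x ∈ Icc a b, 0 ≤ φ x)
    (hφ_meas : AEStronglyMeasurable φ (volume.restrict (Ioc a b))) :
    IntervalIntegrable φ volume a b := by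
  have hcoord : ContinuousOn (fun x => logCoord a b x ^ α) (Icc a b) :=
    (continuousOn_logCoord ha).rpow_const fun _ _ => Or.inr hα
  have hmajorant : IntervalIntegrable (fun x => logCoord a b x ^ α * φ b +
      m * (1 - logCoord a b x ^ α) * φ (a ^ (1 / m))) volume a b :=
    ContinuousOn.intervalIntegrable_of_Icc hab.le (by fun_prop)
  rw [intervalIntegrable_iff_integrableOn_Ioc_of_le hab.le] at hmajorant ⊢
  refine hmajorant.mono' hφ_meas ((ae_restrict_mem measurableSet_Ioc).mono fun x hx => ?_)
  have hx' := Ioc_subset_Icc_self hx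
  rw [norm_of_nonneg (hφ_nonneg x hx')]
  exact hφ.le_logCoord hm ha hab hac hbc hx'

lemma integral_pow_mul_le (hφ : GAConvexOn 1 m c φ) (hm : m ≠ 0) (ha : 0 < a) (hab : a < b)
    (hac : a ^ (1 / m) ≤ c) (hbc : b ≤ c) (n : ℕ) (hint : IntervalIntegrable φ volume a b) :
    ∫ x in a..b, x ^ n * φ x ≤
      (m * (L (a ^ (n + 1)) (b ^ (n + 1)) - a ^ (n + 1)) * φ (a ^ (1 / m)) +
        (b ^ (n + 1) - L (a ^ (n + 1)) (b ^ (n + 1))) * φ b) / (n + 1) := by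
  have hcoord := continuousOn_logCoord (b := b) ha
  have hint_right : IntervalIntegrable (fun x => x ^ n * logCoord a b x * φ b) volume a b :=
    ContinuousOn.intervalIntegrable_of_Icc hab.le (by fun_prop)
  have hint_left : IntervalIntegrable
      (fun x => x ^ n * (1 - logCoord a b x) * (m * φ (a ^ (1 / m)))) volume a b :=
    ContinuousOn.intervalIntegrable_of_Icc hab.le (by fun_prop)
  calc ∫ x in a..b, x ^ n * φ x
      ≤ ∫ x in a..b, (x ^ n * logCoord a b x * φ b +
          x ^ n * (1 - logCoord a b x) * (m * φ (a ^ (1 / m)))) := by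
        refine intervalIntegral.integral_mono_on hab.le
          (hint.continuousOn_mul (continuousOn_id.pow n)) (hint_right.add hint_left) fun x hx => ?_
        have hle := hφ.le_logCoord hm ha hab hac hbc hx
        rw [rpow_one] at hle
        linarith [mul_le_mul_of_nonneg_left hle (pow_nonneg (ha.le.trans hx.1) n)]
    _ = _ := by
        rw [intervalIntegral.integral_add hint_right hint_left,
          intervalIntegral.integral_mul_const, intervalIntegral.integral_mul_const,
          integral_pow_mul_logCoord ha hab, integral_pow_mul_one_sub_logCoord ha hab]
        ring

lemma integral_pow_mul_norm_le {E : Type*} [NormedAddCommGroup E] {u : ℝ → E} {q : ℝ}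
    (hu_conv : GAConvexOn 1 m c fun x => ‖u x‖ ^ q) (hm : m ≠ 0) (ha : 0 < a) (hab : a < b)
    (hac : a ^ (1 / m) ≤ c) (hbc : b ≤ c) (hq : 1 ≤ q) (n : ℕ)
    (hu : AEStronglyMeasurable u (volume.restrict (Ioc a b)))
    (hint : IntervalIntegrable (fun x => ‖u x‖ ^ q) volume a b) :
    ∫ x in a..b, x ^ n * ‖u x‖ ≤ (b ^ (n + 1) - a ^ (n + 1)) ^ (1 - 1 / q) *
      (m * (L (a ^ (n + 1)) (b ^ (n + 1)) - a ^ (n + 1)) * ‖u (a ^ (1 / m))‖ ^ q +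
        (b ^ (n + 1) - L (a ^ (n + 1)) (b ^ (n + 1))) * ‖u b‖ ^ q) ^ (1 / q) / (n + 1) := by
  set S := m * (L (a ^ (n + 1)) (b ^ (n + 1)) - a ^ (n + 1)) * ‖u (a ^ (1 / m))‖ ^ q +
    (b ^ (n + 1) - L (a ^ (n + 1)) (b ^ (n + 1))) * ‖u b‖ ^ q
  have hq_moment_le : ∫ x in a..b, x ^ n * ‖u x‖ ^ q ≤ S / (n + 1) :=
    hu_conv.integral_pow_mul_le hm ha hab hac hbc n hint
  have hq_moment_nonneg : 0 ≤ ∫ x in a..b, x ^ n * ‖u x‖ ^ q :=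
    intervalIntegral.integral_nonneg hab.le fun x hx => by
      have := ha.le.trans hx.1
      positivity
  have hS_nonneg : 0 ≤ S := by
    simpa using (le_div_iff₀ (by positivity)).1 (hq_moment_nonneg.trans hq_moment_le)
  have hpow_nonneg : 0 ≤ b ^ (n + 1) - a ^ (n + 1) := sub_nonneg.2 (by gcongr)
  calc ∫ x in a..b, x ^ n * ‖u x‖
      ≤ ((b ^ (n + 1) - a ^ (n + 1)) / (n + 1)) ^ (1 - 1 / q) *
          (∫ x in a..b, x ^ n * ‖u x‖ ^ q) ^ (1 / q) :=
        integral_pow_mul_norm_le_rpow_mul ha.le hab.le hq n hu hint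
    _ ≤ ((b ^ (n + 1) - a ^ (n + 1)) / (n + 1)) ^ (1 - 1 / q) * (S / (n + 1)) ^ (1 / q) := by
        gcongr
    _ = (b ^ (n + 1) - a ^ (n + 1)) ^ (1 - 1 / q) * S ^ (1 / q) / (n + 1) :=
        div_rpow_one_sub_mul_div_rpow hpow_nonneg hS_nonneg (by positivity) _

end GAConvexOn

theorem stmt_3_general (f f' : ℝ → ℝ) (a b m q : ℝ) (n : ℕ) (ha : 0 < a) (hab : a < b)
    (hm : m ≠ 0) (hq : 1 ≤ q) (hcont : ContinuousOn f (Icc a b))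
    (hderiv : ∀ x ∈ Ioo a b, HasDerivAt f (f' x) x)
    (hconv : GAConvexOn 1 m (max (a ^ (1 / m)) b) (fun x => |f' x| ^ q)) :
    |(b ^ (n + 1) * f b - a ^ (n + 1) * f a) / (n + 1) - ∫ x in a..b, x ^ n * f x| ≤
      ((b ^ (n + 2) - a ^ (n + 2)) ^ (1 - 1 / q) / ((n + 1) * (n + 2))) *
        (m * (L (a ^ (n + 2)) (b ^ (n + 2)) - a ^ (n + 2)) * |f' (a ^ (1 / m))| ^ q +
          (b ^ (n + 2) - L (a ^ (n + 2)) (b ^ (n + 2))) * |f' b| ^ q) ^ (1 / q) := by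
  have hq0 : 0 < q := by linarith
  have hf'_meas : AEStronglyMeasurable f' (volume.restrict (Ioc a b)) := by
    rw [← restrict_Ioo_eq_restrict_Ioc]
    exact aestronglyMeasurable_of_hasDerivAt measurableSet_Ioo hderiv
  have hf'q_int : IntervalIntegrable (fun x => |f' x| ^ q) volume a b :=
    hconv.intervalIntegrable zero_le_one hm ha hab (le_max_left _ _) (le_max_right _ _)
      (fun _ _ => by positivity)
      (hf'_meas.norm.aemeasurable.pow_const q).aestronglyMeasurable
  have hf'_int : IntervalIntegrable f' volume a b := by
    rw [intervalIntegrable_iff_integrableOn_Ioc_of_le hab.le] at hf'q_int ⊢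
    exact (memLp_ofReal_of_integrable_norm_rpow hq0 hf'_meas hf'q_int).integrable (by simpa)
  have hmoment := hconv.integral_pow_mul_norm_le hm ha hab (le_max_left _ _) (le_max_right _ _) hq
    (n + 1) hf'_meas hf'q_int
  have hcast : ((n + 1 : ℕ) : ℝ) + 1 = n + 2 := by push_cast; ring
  simp only [norm_eq_abs, hcast] at hmoment
  calc |(b ^ (n + 1) * f b - a ^ (n + 1) * f a) / (n + 1) - ∫ x in a..b, x ^ n * f x|
      ≤ (∫ x in a..b, x ^ (n + 1) * |f' x|) / (n + 1) :=
        abs_boundary_sub_integral_pow_mul_le ha.le hab.le n hcont hderiv hf'_int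
    _ ≤ _ / (n + 1) := div_le_div_of_nonneg_right hmoment (by positivity)
    _ = _ := by field_simp

theorem stmt_3 (f f' : ℝ → ℝ) (a b m q : ℝ) (ha : 0 < a) (hab : a < b)
    (hm : m ∈ Ioc (0:ℝ) 1) (hq : 1 ≤ q)
    (hderiv : ∀ x ∈ Ici (0:ℝ), HasDerivAt f (f' x) x)
    (hint : IntervalIntegrable f' volume a b)
    (hconv : GAConvexOn 1 m (max (a ^ (1/m)) b) (fun x => |f' x| ^ q)) :
    |(b ^ 2 * f b - a ^ 2 * f a) / 2 - ∫ x in a..b, x * f x| ≤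
      ((b ^ 3 - a ^ 3) ^ (1 - 1/q) / 6) *
        (m * (L (a ^ 3) (b ^ 3) - a ^ 3) * |f' (a ^ (1/m))| ^ q +
          (b ^ 3 - L (a ^ 3) (b ^ 3)) * |f' b| ^ q) ^ (1/q) := by
  have hderiv' : ∀ x ∈ Icc a b, HasDerivAt f (f' x) x := fun x hx => hderiv x (ha.le.trans hx.1)
  convert stmt_3_general f f' a b m q 1 ha hab hm.1.ne' hq
    (fun x hx => (hderiv' x hx).continuousAt.continuousWithinAt)
    (fun x hx => hderiv' x (Ioo_subset_Icc_self hx)) hconv using 3 <;> norm_num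
end

section
/- Let f : [0,∞) → ℝ be differentiable with f' Lebesgue integrable on [a,b], where 0 < a < b < ∞. Let (α,m) ∈ (0,1]² and q ≥ 1. If |f'|^q is (α,m)-GA-convex on [0, max{a^{1/m}, b}], then |(b²·f(b) − a²·f(a))/2 − ∫_a^b x·f(x) dx| ≤ ((ln b − ln a)/2) · L(a³,b³) · |f'(b)|. -/
/-!
Fix `x ≤ z` in `(0, c]`. For small `y > 0` one can write `x = z ^ (1 - r) * y ^ (m * r)`, and
`r → 0` as `y → 0⁺`. If `h` is `(α,m)`-GA-convex on `[0, c]` and stays below a constant at points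
`y` accumulating at `0`, the convexity inequality at `z, y` tends to `h x ≤ h z`, so `h` is monotone
on `(0, c]`. By the mean value theorem `f' 0` is a cluster point of `f' y` as `y → 0⁺`, so this
applies to `h = |f'| ^ q`, and `|f'| ≤ |f' b|` on `(0, b]`. Integration by parts against `x ^ 2 / 2`
bounds the left-hand side by `|f' b| * ∫ x in a..b, x ^ 2 / 2`, which equals the right-hand side.
-/

open Real MeasureTheory Set

section Monotonicity

open Filter Topology

theorem mapClusterPt_deriv_nhdsGT {f f' : ℝ → ℝ} {x₀ : ℝ}
    (hx₀ : HasDerivWithinAt f (f' x₀) (Ioi x₀) x₀)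
    (hf : ∀ᶠ x in 𝓝[>] x₀, HasDerivAt f (f' x) x) :
    MapClusterPt (f' x₀) (𝓝[>] x₀) f' := by
  rw [mapClusterPt_iff_frequently]
  intro s hs
  rw [frequently_iff]
  intro U hU
  obtain ⟨d, hd, hdU⟩ := mem_nhdsGT_iff_exists_Ioo_subset.1 (inter_mem hU hf)
  have hslope : ∀ᶠ y in 𝓝[>] x₀, slope f x₀ y ∈ s :=
    (hasDerivWithinAt_iff_tendsto_slope' self_notMem_Ioi).1 hx₀ hs
  obtain ⟨y, hys, hy⟩ := (hslope.and (Ioo_mem_nhdsGT hd)).exists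
  have hderiv : ∀ x ∈ Ioc x₀ y, HasDerivAt f (f' x) x :=
    fun x hx => (hdU ⟨hx.1, hx.2.trans_lt hy.2⟩).2
  have hcont : ContinuousOn f (Icc x₀ y) := by
    intro x hx
    rcases hx.1.eq_or_lt with rfl | hlt
    · exact hx₀.Ici_of_Ioi.continuousWithinAt.mono Icc_subset_Ici_self
    · exact (hderiv x ⟨hlt, hx.2⟩).continuousAt.continuousWithinAt
  obtain ⟨c, hc, hfc⟩ := exists_hasDerivAt_eq_slope f f' hy.1 hcont
    fun x hx => hderiv x ⟨hx.1, hx.2.le⟩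
  refine ⟨c, (hdU ⟨hc.1, hc.2.trans hy.2⟩).1, ?_⟩
  rwa [hfc, ← slope_def_field]

/-- The weight `r` for which `x` is the `m`-geometric mean `z ^ (1 - r) * y ^ (m * r)` of `z` and
`y`, obtained by solving for `r` after taking logarithms. It is meaningful when
`log z ≠ m * log y`. -/
noncomputable def geomWeight (m x z y : ℝ) : ℝ :=
  (Real.log z - Real.log x) / (Real.log z - m * Real.log y)

theorem rpow_mul_rpow_geomWeight {m x y z : ℝ} (hx : 0 < x) (hy : 0 < y) (hz : 0 < z)
    (h : Real.log z - m * Real.log y ≠ 0) :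
    z ^ (1 - geomWeight m x z y) * y ^ (m * geomWeight m x z y) = x := by
  have hr : geomWeight m x z y * (Real.log z - m * Real.log y) = Real.log z - Real.log x :=
    div_mul_cancel₀ _ h
  rw [Real.rpow_def_of_pos hz, Real.rpow_def_of_pos hy, ← Real.exp_add]
  nth_rw 3 [← Real.exp_log hx]
  congr 1
  linarith

theorem tendsto_log_sub_mul_log_nhdsGT_zero {m : ℝ} (hm : 0 < m) (z : ℝ) :
    Tendsto (fun y => Real.log z - m * Real.log y) (𝓝[>] 0) atTop := by
  simp only [sub_eq_add_neg, ← mul_neg]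
  exact tendsto_atTop_add_const_left _ _
    ((tendsto_neg_atBot_atTop.comp Real.tendsto_log_nhdsGT_zero).const_mul_atTop hm)

theorem tendsto_geomWeight_nhdsGT_zero {m : ℝ} (hm : 0 < m) (x z : ℝ) :
    Tendsto (geomWeight m x z) (𝓝[>] 0) (𝓝 0) :=
  (tendsto_log_sub_mul_log_nhdsGT_zero hm z).const_div_atTop _

namespace GAConvexOn

variable {α m c : ℝ} {h : ℝ → ℝ}

theorem mono {d : ℝ} (hh : GAConvexOn α m d h) (hcd : c ≤ d) : GAConvexOn α m c h :=
  fun x hx y hy => hh x (Icc_subset_Icc_right hcd hx) y (Icc_subset_Icc_right hcd hy)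

theorem monotoneOn_of_frequently_le {M : ℝ} (hh : GAConvexOn α m c h) (hα : 0 ≤ α) (hm : 0 < m)
    (hM : ∃ᶠ y in 𝓝[>] 0, h y ≤ M) : MonotoneOn h (Ioc 0 c) := by
  intro x hx z hz hxz
  have hr := tendsto_geomWeight_nhdsGT_zero hm x z
  have hlim : Tendsto (fun y => (1 - geomWeight m x z y) ^ α * h z +
      m * (1 - (1 - geomWeight m x z y) ^ α) * M) (𝓝[>] 0) (𝓝 (h z)) := by
    have hpow : Tendsto (fun y => (1 - geomWeight m x z y) ^ α) (𝓝[>] 0) (𝓝 1) := by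
      simpa using (hr.const_sub 1).rpow_const (p := α) (by simp)
    simpa using (hpow.mul_const (h z)).add (((hpow.const_sub 1).const_mul m).mul_const M)
  have hpos := (tendsto_log_sub_mul_log_nhdsGT_zero hm z).eventually_gt_atTop 0
  have hlt := hr.eventually_lt_const one_pos
  have hy_mem : ∀ᶠ y in 𝓝[>] (0 : ℝ), y ∈ Ioo 0 c := Ioo_mem_nhdsGT (hz.1.trans_le hz.2)
  refine ge_of_tendsto_of_frequently hlim
    ((hM.and_eventually (hpos.and (hlt.and hy_mem))).mono ?_)
  rintro y ⟨hyM, hy_pos, hr_lt, hy⟩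
  have hr_nonneg : 0 ≤ geomWeight m x z y :=
    div_nonneg (sub_nonneg.2 (Real.log_le_log hx.1 hxz)) hy_pos.le
  have hconv := hh z ⟨hz.1.le, hz.2⟩ y ⟨hy.1.le, hy.2.le⟩ (1 - geomWeight m x z y)
    ⟨by linarith, by linarith⟩
  rw [sub_sub_cancel, rpow_mul_rpow_geomWeight hx.1 hy.1 hz.1 hy_pos.ne'] at hconv
  have hpow_le : (1 - geomWeight m x z y) ^ α ≤ 1 :=
    Real.rpow_le_one (by linarith) (by linarith) hα
  have hcoeff : 0 ≤ m * (1 - (1 - geomWeight m x z y) ^ α) :=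
    mul_nonneg hm.le (sub_nonneg.2 hpow_le)
  exact hconv.trans (add_le_add_right (mul_le_mul_of_nonneg_left hyM hcoeff) _)

theorem monotoneOn_abs_deriv {f f' : ℝ → ℝ} {q : ℝ} (hα : 0 ≤ α) (hm : 0 < m) (hq : 0 < q)
    (hf₀ : HasDerivWithinAt f (f' 0) (Ioi 0) 0)
    (hf : ∀ᶠ x in 𝓝[>] 0, HasDerivAt f (f' x) x)
    (hh : GAConvexOn α m c fun x => |f' x| ^ q) :
    MonotoneOn (fun x => |f' x|) (Ioc 0 c) := by
  have hbdd : ∃ᶠ y in 𝓝[>] 0, |f' y| ^ q ≤ (|f' 0| + 1) ^ q :=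
    ((mapClusterPt_deriv_nhdsGT hf₀ hf).frequently
      (continuous_abs.continuousAt.eventually_lt_const (lt_add_one |f' 0|))).mono
      fun y hy => Real.rpow_le_rpow (abs_nonneg _) hy.le hq.le
  exact fun x hx z hz hxz => (Real.rpow_le_rpow_iff (abs_nonneg _) (abs_nonneg _) hq).1
    (hh.monotoneOn_of_frequently_le hα hm hbdd hx hz hxz)

end GAConvexOn

end Monotonicity

section IntegrationByParts

variable {E : Type*} [NormedAddCommGroup E] [NormedSpace ℝ E] [CompleteSpace E]
  {f f' : ℝ → E} {a b C : ℝ}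

theorem intervalIntegrable_of_hasDerivAt_of_norm_le (hab : a ≤ b)
    (hf : ∀ x ∈ Ioo a b, HasDerivAt f (f' x) x) (hC : ∀ x ∈ Ioo a b, ‖f' x‖ ≤ C) :
    IntervalIntegrable f' volume a b := by
  have hderiv : EqOn (deriv f) f' (Ioo a b) := fun x hx => (hf x hx).deriv
  rw [intervalIntegrable_iff_integrableOn_Ioo_of_le hab,
    ← integrableOn_congr_fun hderiv measurableSet_Ioo]
  refine Measure.integrableOn_of_bounded measure_Ioo_lt_top.ne
    (aestronglyMeasurable_deriv f volume) (M := C)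
    ((ae_restrict_iff' measurableSet_Ioo).2 (.of_forall fun x hx => ?_))
  rw [hderiv hx]
  exact hC x hx

theorem norm_smul_sub_smul_sub_integral_smul_le {u u' : ℝ → ℝ} (hab : a ≤ b)
    (hu : ContinuousOn u (Icc a b)) (hf : ContinuousOn f (Icc a b))
    (huu' : ∀ x ∈ Ioo a b, HasDerivAt u (u' x) x) (hff' : ∀ x ∈ Ioo a b, HasDerivAt f (f' x) x)
    (hu' : IntervalIntegrable u' volume a b) (hC : ∀ x ∈ Ioo a b, ‖f' x‖ ≤ C) :
    ‖u b • f b - u a • f a - ∫ x in a..b, u' x • f x‖ ≤ (∫ x in a..b, |u x|) * C := by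
  have hf' := intervalIntegrable_of_hasDerivAt_of_norm_le hab hff' hC
  rw [← uIcc_of_le hab] at hu hf
  rw [← intervalIntegral.integral_smul_deriv_eq_deriv_smul_of_hasDerivAt hu hf
    (by simpa only [min_eq_left hab, max_eq_right hab] using huu')
    (by simpa only [min_eq_left hab, max_eq_right hab] using hff') hu' hf',
    ← intervalIntegral.integral_mul_const]
  refine intervalIntegral.norm_integral_le_of_norm_le hab ?_
    (hu.abs.intervalIntegrable.mul_const C)
  filter_upwards [Measure.ae_ne volume b] with x hxb hx
  rw [norm_smul, Real.norm_eq_abs]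
  gcongr
  exact hC x ⟨hx.1, hx.2.lt_of_ne hxb⟩

end IntegrationByParts

theorem log_sub_log_mul_L_pow {x y : ℝ} (hx : 0 < x) (hxy : x < y) (n : ℕ) :
    (Real.log y - Real.log x) * L (x ^ n) (y ^ n) = (y ^ n - x ^ n) / n := by
  have hlog : Real.log y - Real.log x ≠ 0 := (sub_pos.2 (Real.log_lt_log hx hxy)).ne'
  rw [L, Real.log_pow, Real.log_pow, ← mul_sub, ← mul_div_assoc, mul_comm (n : ℝ),
    mul_div_mul_left _ _ hlog]

theorem stmt_5_general {f f' : ℝ → ℝ} {a b α m q : ℝ} (ha : 0 < a) (hab : a < b)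
    (hα : 0 ≤ α) (hm : 0 < m) (hq : 0 < q)
    (hderiv : ∀ x ∈ Icc 0 b, HasDerivWithinAt f (f' x) (Icc 0 b) x)
    (hconv : GAConvexOn α m b fun x => |f' x| ^ q) :
    |(b ^ 2 * f b - a ^ 2 * f a) / 2 - ∫ x in a..b, x * f x| ≤
      ((Real.log b - Real.log a) / 2) * L (a ^ 3) (b ^ 3) * |f' b| := by
  have hb : 0 < b := ha.trans hab
  have hderivAt : ∀ x ∈ Ioo 0 b, HasDerivAt f (f' x) x := fun x hx =>
    (hderiv x (Ioo_subset_Icc_self hx)).hasDerivAt (Icc_mem_nhds hx.1 hx.2)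
  have hmono : MonotoneOn (fun x => |f' x|) (Ioc 0 b) :=
    hconv.monotoneOn_abs_deriv hα hm hq
      ((hderiv 0 ⟨le_rfl, hb.le⟩).mono_of_mem_nhdsWithin (Icc_mem_nhdsGT hb))
      (Filter.mem_of_superset (Ioo_mem_nhdsGT hb) hderivAt)
  have hcont : ContinuousOn f (Icc a b) := fun x hx =>
    (hderiv x ⟨ha.le.trans hx.1, hx.2⟩).continuousWithinAt.mono (Icc_subset_Icc_left ha.le)
  calc |(b ^ 2 * f b - a ^ 2 * f a) / 2 - ∫ x in a..b, x * f x|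
      = ‖(b ^ 2 / 2) • f b - (a ^ 2 / 2) • f a - ∫ x in a..b, x • f x‖ := by
        simp only [smul_eq_mul, Real.norm_eq_abs]; ring_nf
    _ ≤ (∫ x in a..b, |x ^ 2 / 2|) * |f' b| :=
        norm_smul_sub_smul_sub_integral_smul_le (u := fun x => x ^ 2 / 2) hab.le (by fun_prop)
          hcont (fun x _ => by simpa using (hasDerivAt_pow 2 x).div_const 2)
          (fun x hx => hderivAt x ⟨ha.trans hx.1, hx.2⟩) intervalIntegral.intervalIntegrable_id
          fun x hx => hmono ⟨ha.trans hx.1, hx.2.le⟩ ⟨hb, le_rfl⟩ hx.2.le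
    _ = (Real.log b - Real.log a) / 2 * L (a ^ 3) (b ^ 3) * |f' b| := by
        simp only [abs_div, abs_sq, abs_two, intervalIntegral.integral_div, integral_pow]
        rw [div_mul_eq_mul_div (Real.log b - _), log_sub_log_mul_L_pow ha hab]
        push_cast
        ring

theorem stmt_5 (f f' : ℝ → ℝ) (a b α m q : ℝ) (ha : 0 < a) (hab : a < b)
    (hα : α ∈ Ioc (0:ℝ) 1) (hm : m ∈ Ioc (0:ℝ) 1) (hq : 1 ≤ q)
    (hderiv : ∀ x ∈ Ici (0:ℝ), HasDerivAt f (f' x) x)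
    (hint : IntervalIntegrable f' volume a b)
    (hconv : GAConvexOn α m (max (a ^ (1/m)) b) (fun x => |f' x| ^ q)) :
    |(b ^ 2 * f b - a ^ 2 * f a) / 2 - ∫ x in a..b, x * f x| ≤
      ((Real.log b - Real.log a) / 2) * L (a ^ 3) (b ^ 3) * |f' b| :=
  stmt_5_general ha hab hα.1.le hm.1 (one_pos.trans_le hq)
    (fun x hx => (hderiv x hx.1).hasDerivWithinAt) (hconv.mono (le_max_right _ _))
end

section
/- Let f : [0,∞) → ℝ be differentiable with f' Lebesgue integrable on [a,b], where 0 < a < b < ∞. Let (α,m) ∈ (0,1]² and q > 1. If |f'|^q is (α,m)-GA-convex on [0, max{a^{1/m}, b}], then |(b²·f(b) − a²·f(a))/2 − ∫_a^b x·f(x) dx| ≤ ((ln b − ln a)/2) · (1/(α+1))^{1/q} · [L(a^{3q/(q−1)}, b^{3q/(q−1)})]^{1−1/q} · [ |f'(b)|^q + α·m·|f'(a^{1/m})|^q ]^{1/q}. -/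
open Real MeasureTheory Set

/-!
Substituting `x = a ^ (1 - t) * b ^ t` turns the left-hand side, after an integration by parts, into
`(log b - log a) / 2 * |∫ t in 0..1, x ^ 3 * f' x|`. Hölder's inequality separates the powers of
`x`, whose integral is exactly a logarithmic mean, from `|f'| ^ q`. Along this path
`x = b ^ t * (a ^ (1 / m)) ^ (m * (1 - t))`, so GA-convexity bounds `|f' x| ^ q` by
`t ^ α * |f' b| ^ q + m * (1 - t ^ α) * |f' (a ^ (1 / m))| ^ q`, which is integrated explicitly. The
same bound makes `f'` integrable.
-/

/-- The weighted geometric mean of `a` and `b`. As `t` runs over `[0, 1]`, it parametrizes the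
interval from `a` to `b` by an affine function of the logarithm. -/
noncomputable def geomInterp (a b t : ℝ) : ℝ := a ^ (1 - t) * b ^ t

section GeomInterp

variable {a b : ℝ}

lemma geomInterp_zero (a b : ℝ) : geomInterp a b 0 = a := by simp [geomInterp]

lemma geomInterp_one (a b : ℝ) : geomInterp a b 1 = b := by simp [geomInterp]

lemma geomInterp_eq_exp (ha : 0 < a) (hb : 0 < b) (t : ℝ) :
    geomInterp a b t = exp (log a + t * (log b - log a)) := by
  rw [geomInterp, rpow_def_of_pos ha, rpow_def_of_pos hb, ← exp_add]
  ring_nf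

lemma geomInterp_pos (ha : 0 < a) (hb : 0 < b) (t : ℝ) : 0 < geomInterp a b t :=
  mul_pos (rpow_pos_of_pos ha _) (rpow_pos_of_pos hb _)

lemma geomInterp_rpow (ha : 0 ≤ a) (hb : 0 ≤ b) (t r : ℝ) :
    geomInterp a b t ^ r = geomInterp (a ^ r) (b ^ r) t := by
  rw [geomInterp, geomInterp, mul_rpow (rpow_nonneg ha _) (rpow_nonneg hb _)]
  simp only [← rpow_mul ha, ← rpow_mul hb, mul_comm r]

lemma strictMono_geomInterp (ha : 0 < a) (hab : a < b) : StrictMono (geomInterp a b) := by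
  intro s t hst
  rw [geomInterp_eq_exp ha (ha.trans hab), geomInterp_eq_exp ha (ha.trans hab)]
  have hlog : 0 < log b - log a := sub_pos.2 (log_lt_log ha hab)
  gcongr

lemma geomInterp_mem_Ioo (ha : 0 < a) (hab : a < b) {t : ℝ} (ht : t ∈ Ioo (0 : ℝ) 1) :
    geomInterp a b t ∈ Ioo a b := by
  have hmono := strictMono_geomInterp ha hab
  exact ⟨(geomInterp_zero a b).symm.trans_lt (hmono ht.1),
    (hmono ht.2).trans_eq (geomInterp_one a b)⟩

lemma hasDerivAt_geomInterp (ha : 0 < a) (hb : 0 < b) (t : ℝ) :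
    HasDerivAt (geomInterp a b) ((log b - log a) * geomInterp a b t) t := by
  rw [funext (geomInterp_eq_exp ha hb)]
  have h := (((hasDerivAt_id t).mul_const (log b - log a)).const_add (log a)).exp
  exact h.congr_deriv (by simp only [id_eq]; ring)

lemma continuous_geomInterp (ha : 0 < a) (hb : 0 < b) : Continuous (geomInterp a b) :=
  continuous_iff_continuousAt.2 fun t => (hasDerivAt_geomInterp ha hb t).continuousAt

lemma integral_geomInterp (ha : 0 < a) (hb : 0 < b) (hab : a ≠ b) :
    ∫ t in (0 : ℝ)..1, geomInterp a b t = L a b := by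
  have hlog : log b - log a ≠ 0 := sub_ne_zero.2 fun h => hab (log_injOn_pos ha hb h.symm)
  have hprimitive (t : ℝ) :
      HasDerivAt (fun t => geomInterp a b t / (log b - log a)) (geomInterp a b t) t :=
    ((hasDerivAt_geomInterp ha hb t).div_const _).congr_deriv (mul_div_cancel_left₀ _ hlog)
  rw [intervalIntegral.integral_eq_sub_of_hasDerivAt (fun t _ => hprimitive t)
    ((continuous_geomInterp ha hb).intervalIntegrable 0 1), geomInterp_one, geomInterp_zero,
    ← sub_div, L]

lemma integral_geomInterp_rpow (ha : 0 < a) (hb : 0 < b) (hab : a ≠ b) {r : ℝ} (hr : r ≠ 0) :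
    ∫ t in (0 : ℝ)..1, geomInterp a b t ^ r = L (a ^ r) (b ^ r) := by
  simp only [geomInterp_rpow ha.le hb.le]
  exact integral_geomInterp (rpow_pos_of_pos ha r) (rpow_pos_of_pos hb r)
    fun h => hab ((rpow_left_inj ha.le hb.le hr).1 h)

lemma L_nonneg (ha : 0 < a) (hb : 0 < b) : 0 ≤ L a b := by
  rcases eq_or_ne a b with rfl | hab
  · simp [L]
  rw [← integral_geomInterp ha hb hab]
  exact intervalIntegral.integral_nonneg zero_le_one fun t _ => (geomInterp_pos ha hb t).le

variable {E : Type*} [NormedAddCommGroup E] [NormedSpace ℝ E]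

lemma integral_eq_integral_comp_geomInterp (ha : 0 < a) (hab : a ≤ b) (g : ℝ → E) :
    ∫ x in a..b, g x =
      (log b - log a) • ∫ t in (0 : ℝ)..1, geomInterp a b t • g (geomInterp a b t) := by
  have hb : 0 < b := ha.trans_le hab
  have hsubst := intervalIntegral.integral_deriv_smul_comp_of_deriv_nonneg (g := g)
    (continuous_geomInterp ha hb).continuousOn
    (fun t (_ : t ∈ Ioo (min 0 1) (max 0 1)) => hasDerivAt_geomInterp ha hb t)
    fun t _ => mul_nonneg (sub_nonneg.2 (log_le_log ha hab)) (geomInterp_pos ha hb t).le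
  rw [geomInterp_zero, geomInterp_one] at hsubst
  simp only [← hsubst, Function.comp_apply, mul_smul, intervalIntegral.integral_smul]

lemma intervalIntegrable_of_comp_geomInterp (ha : 0 < a) (hab : a ≤ b) {g : ℝ → E}
    (hg : IntervalIntegrable (fun t => g (geomInterp a b t)) volume 0 1) :
    IntervalIntegrable g volume a b := by
  have hb : 0 < b := ha.trans_le hab
  have hφ := continuous_geomInterp ha hb
  have hsubst := intervalIntegral.integrable_deriv_smul_comp_iff_of_deriv_nonneg (g := g)
    hφ.continuousOn
    (fun t (_ : t ∈ Ioo (min 0 1) (max 0 1)) => hasDerivAt_geomInterp ha hb t)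
    fun t _ => mul_nonneg (sub_nonneg.2 (log_le_log ha hab)) (geomInterp_pos ha hb t).le
  rw [geomInterp_zero, geomInterp_one] at hsubst
  exact hsubst.1 (hg.continuousOn_smul (continuous_const.mul hφ).continuousOn)

lemma aestronglyMeasurable_deriv_comp_geomInterp (ha : 0 < a) (hab : a < b) {f f' : ℝ → ℝ}
    (hderiv : ∀ x ∈ Ioo a b, HasDerivAt f (f' x) x) :
    AEStronglyMeasurable (fun t => f' (geomInterp a b t)) (volume.restrict (Ioc 0 1)) := by
  have hmeas : Measurable fun t => deriv f (geomInterp a b t) :=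
    (measurable_deriv f).comp (continuous_geomInterp ha (ha.trans hab)).measurable
  rw [← restrict_Ioo_eq_restrict_Ioc]
  refine hmeas.aestronglyMeasurable.congr ?_
  filter_upwards [ae_restrict_mem measurableSet_Ioo] with t ht
  exact (hderiv _ (geomInterp_mem_Ioo ha hab ht)).deriv

end GeomInterp

section IntegralInequalities

variable {a b : ℝ}

lemma memLp_ofReal_iff_integrable_norm_rpow {Ω : Type*} [MeasurableSpace Ω] {μ : Measure Ω}
    {E : Type*} [NormedAddCommGroup E] {g : Ω → E} {q : ℝ} (hq : 0 < q)
    (hg : AEStronglyMeasurable g μ) :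
    MemLp g (ENNReal.ofReal q) μ ↔ Integrable (fun x => ‖g x‖ ^ q) μ := by
  rw [← integrable_norm_rpow_iff hg (by simpa using hq) ENNReal.ofReal_ne_top,
    ENNReal.toReal_ofReal hq.le]

lemma abs_intervalIntegral_mul_le_Lp_mul_Lq {u v : ℝ → ℝ} {p q : ℝ} (hab : a ≤ b)
    (hpq : p.HolderConjugate q)
    (hu : MemLp u (ENNReal.ofReal p) (volume.restrict (Ioc a b)))
    (hv : MemLp v (ENNReal.ofReal q) (volume.restrict (Ioc a b))) :
    |∫ x in a..b, u x * v x| ≤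
      (∫ x in a..b, |u x| ^ p) ^ (1 / p) * (∫ x in a..b, |v x| ^ q) ^ (1 / q) := by
  simp only [intervalIntegral.integral_of_le hab]
  calc |∫ x in Ioc a b, u x * v x|
      ≤ ∫ x in Ioc a b, |u x * v x| := abs_integral_le_integral_abs
    _ = ∫ x in Ioc a b, ‖u x‖ * ‖v x‖ := by simp only [abs_mul, norm_eq_abs]
    _ ≤ _ := integral_mul_norm_le_Lp_mul_Lq hpq hu hv

lemma abs_integral_pow_mul_le_logMean_mul_Lq (ha : 0 < a) (hab : a < b) {g : ℝ → ℝ} {p q : ℝ}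
    (n : ℕ) (hpq : p.HolderConjugate q)
    (hg : MemLp (fun t => g (geomInterp a b t)) (ENNReal.ofReal q) (volume.restrict (Ioc 0 1))) :
    |∫ x in a..b, x ^ n * g x| ≤
      (log b - log a) * (L (a ^ ((n + 1) * p)) (b ^ ((n + 1) * p)) ^ (1 / p) *
        (∫ t in (0 : ℝ)..1, |g (geomInterp a b t)| ^ q) ^ (1 / q)) := by
  have hb : 0 < b := ha.trans hab
  have hexp : ((n : ℝ) + 1) * p ≠ 0 := mul_ne_zero n.cast_add_one_ne_zero hpq.ne_zero
  have hpow (t : ℝ) :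
      |geomInterp a b t ^ (n + 1)| ^ p = geomInterp a b t ^ (((n : ℝ) + 1) * p) := by
    have hφ := geomInterp_pos ha hb t
    rw [abs_of_pos (pow_pos hφ _), ← rpow_natCast, ← rpow_mul hφ.le, Nat.cast_add_one]
  have hcont := (continuous_geomInterp ha hb).pow (n + 1)
  have hu : MemLp (fun t => geomInterp a b t ^ (n + 1)) (ENNReal.ofReal p)
      (volume.restrict (Ioc 0 1)) :=
    (memLp_ofReal_iff_integrable_norm_rpow hpq.pos hcont.aestronglyMeasurable).2
      ((hcont.abs.rpow_const fun _ => Or.inr hpq.nonneg).intervalIntegrable 0 1).1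
  have hholder := abs_intervalIntegral_mul_le_Lp_mul_Lq zero_le_one hpq hu hg
  simp only [hpow, integral_geomInterp_rpow ha hb hab.ne hexp] at hholder
  have hlog : 0 ≤ log b - log a := sub_nonneg.2 (log_le_log ha hab.le)
  rw [integral_eq_integral_comp_geomInterp ha hab.le, smul_eq_mul, abs_mul, abs_of_nonneg hlog]
  simp only [smul_eq_mul, ← mul_assoc, ← pow_succ']
  rw [mul_assoc]
  gcongr

lemma half_sq_mul_sub_integral_mul_eq {f f' : ℝ → ℝ} (hab : a ≤ b)
    (hf : ContinuousOn f (Icc a b)) (hderiv : ∀ x ∈ Ioo a b, HasDerivAt f (f' x) x)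
    (hint : IntervalIntegrable f' volume a b) :
    (b ^ 2 * f b - a ^ 2 * f a) / 2 - ∫ x in a..b, x * f x = (∫ x in a..b, x ^ 2 * f' x) / 2 := by
  have hparts := intervalIntegral.integral_mul_deriv_eq_deriv_mul_of_hasDerivAt
    (u := fun x : ℝ => x ^ 2 / 2) (u' := fun x => x) (by fun_prop) (by rwa [uIcc_of_le hab])
    (fun x _ => ((hasDerivAt_pow 2 x).div_const 2).congr_deriv (by simp))
    (by rwa [min_eq_left hab, max_eq_right hab]) (continuous_id.intervalIntegrable a b) hint
  simp only [div_mul_eq_mul_div, intervalIntegral.integral_div] at hparts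
  rw [hparts]
  ring

end IntegralInequalities

section GAConvexOn

variable {α : ℝ}

lemma intervalIntegrable_rpow_mul_add_one_sub_rpow_mul (hα : -1 < α) (A B : ℝ) :
    IntervalIntegrable (fun t : ℝ => t ^ α * B + (1 - t ^ α) * A) volume 0 1 := by
  have hpow := intervalIntegral.intervalIntegrable_rpow' (a := 0) (b := 1) hα
  exact (hpow.mul_const B).add ((intervalIntegrable_const.sub hpow).mul_const A)

lemma integral_rpow_mul_add_one_sub_rpow_mul (hα : -1 < α) (A B : ℝ) :
    ∫ t in (0 : ℝ)..1, (t ^ α * B + (1 - t ^ α) * A) = 1 / (α + 1) * (B + α * A) := by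
  have hα' : α + 1 ≠ 0 := by linarith
  have hpow := intervalIntegral.intervalIntegrable_rpow' (a := 0) (b := 1) hα
  rw [intervalIntegral.integral_add (hpow.mul_const B)
      ((intervalIntegrable_const.sub hpow).mul_const A),
    intervalIntegral.integral_mul_const, intervalIntegral.integral_mul_const,
    intervalIntegral.integral_sub intervalIntegrable_const hpow, integral_rpow (Or.inl hα),
    one_rpow, zero_rpow hα']
  simp only [intervalIntegral.integral_const, smul_eq_mul]
  field_simp
  ring

variable {a b m c : ℝ} {h : ℝ → ℝ}

lemma GAConvexOn.comp_geomInterp_le (hh : GAConvexOn α m c h) (ha : 0 ≤ a) (hb : 0 ≤ b)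
    (hm : m ≠ 0) (hac : a ^ (1 / m) ≤ c) (hbc : b ≤ c) {t : ℝ} (ht : t ∈ Icc (0 : ℝ) 1) :
    h (geomInterp a b t) ≤ t ^ α * h b + (1 - t ^ α) * (m * h (a ^ (1 / m))) := by
  have hpath : b ^ t * (a ^ (1 / m)) ^ (m * (1 - t)) = geomInterp a b t := by
    rw [← rpow_mul ha, ← mul_assoc, one_div_mul_cancel hm, one_mul, mul_comm, geomInterp]
  have hle := hh b ⟨hb, hbc⟩ (a ^ (1 / m)) ⟨rpow_nonneg ha _, hac⟩ t ht
  rw [hpath] at hle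
  linarith

lemma GAConvexOn.intervalIntegrable_comp_geomInterp (hh : GAConvexOn α m c h) (ha : 0 ≤ a)
    (hb : 0 ≤ b) (hα : -1 < α) (hm : m ≠ 0) (hac : a ^ (1 / m) ≤ c) (hbc : b ≤ c)
    (hmeas : AEStronglyMeasurable (fun t => h (geomInterp a b t)) (volume.restrict (Ioc 0 1)))
    (hnonneg : ∀ x, 0 ≤ h x) :
    IntervalIntegrable (fun t => h (geomInterp a b t)) volume 0 1 := by
  refine (intervalIntegrable_rpow_mul_add_one_sub_rpow_mul hα (m * h (a ^ (1 / m))) (h b)).mono_fun'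
    (by rwa [uIoc_of_le zero_le_one]) ?_
  rw [uIoc_of_le zero_le_one]
  filter_upwards [ae_restrict_mem measurableSet_Ioc] with t ht
  rw [norm_of_nonneg (hnonneg _)]
  exact hh.comp_geomInterp_le ha hb hm hac hbc (Ioc_subset_Icc_self ht)

lemma GAConvexOn.integral_comp_geomInterp_le (hh : GAConvexOn α m c h) (ha : 0 ≤ a) (hb : 0 ≤ b)
    (hα : -1 < α) (hm : m ≠ 0) (hac : a ^ (1 / m) ≤ c) (hbc : b ≤ c)
    (hint : IntervalIntegrable (fun t => h (geomInterp a b t)) volume 0 1) :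
    ∫ t in (0 : ℝ)..1, h (geomInterp a b t) ≤
      1 / (α + 1) * (h b + α * m * h (a ^ (1 / m))) := by
  rw [mul_assoc α, ← integral_rpow_mul_add_one_sub_rpow_mul hα]
  exact intervalIntegral.integral_mono_on zero_le_one hint
    (intervalIntegrable_rpow_mul_add_one_sub_rpow_mul hα _ _)
    fun _ ht => hh.comp_geomInterp_le ha hb hm hac hbc ht

variable {g : ℝ → ℝ} {q : ℝ}

lemma GAConvexOn.memLp_comp_geomInterp (hg : GAConvexOn α m c fun x => |g x| ^ q) (ha : 0 ≤ a)
    (hb : 0 ≤ b) (hα : -1 < α) (hm : m ≠ 0) (hq : 0 < q) (hac : a ^ (1 / m) ≤ c) (hbc : b ≤ c)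
    (hmeas : AEStronglyMeasurable (fun t => g (geomInterp a b t)) (volume.restrict (Ioc 0 1))) :
    MemLp (fun t => g (geomInterp a b t)) (ENNReal.ofReal q) (volume.restrict (Ioc 0 1)) :=
  (memLp_ofReal_iff_integrable_norm_rpow hq hmeas).2 <|
    (hg.intervalIntegrable_comp_geomInterp ha hb hα hm hac hbc
      (hmeas.norm.aemeasurable.pow_const q).aestronglyMeasurable
      fun x => rpow_nonneg (abs_nonneg (g x)) q).1

lemma GAConvexOn.Lq_comp_geomInterp_le (hg : GAConvexOn α m c fun x => |g x| ^ q) (ha : 0 ≤ a)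
    (hb : 0 ≤ b) (hα : -1 < α) (hm : m ≠ 0) (hq : 0 < q) (hac : a ^ (1 / m) ≤ c) (hbc : b ≤ c)
    (hmem : MemLp (fun t => g (geomInterp a b t)) (ENNReal.ofReal q)
      (volume.restrict (Ioc 0 1))) :
    (∫ t in (0 : ℝ)..1, |g (geomInterp a b t)| ^ q) ^ (1 / q) ≤
      (1 / (α + 1)) ^ (1 / q) * (|g b| ^ q + α * m * |g (a ^ (1 / m))| ^ q) ^ (1 / q) := by
  have hint := (memLp_ofReal_iff_integrable_norm_rpow hq hmem.1).1 hmem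
  have hle := hg.integral_comp_geomInterp_le ha hb hα hm hac hbc
    ((intervalIntegrable_iff_integrableOn_Ioc_of_le zero_le_one).2 hint)
  have hnonneg : 0 ≤ ∫ t in (0 : ℝ)..1, |g (geomInterp a b t)| ^ q :=
    intervalIntegral.integral_nonneg zero_le_one fun t _ => rpow_nonneg (abs_nonneg _) q
  have hα₁ : 0 < 1 / (α + 1) := one_div_pos.2 (neg_lt_iff_pos_add.1 hα)
  rw [← mul_rpow hα₁.le (nonneg_of_mul_nonneg_right (hnonneg.trans hle) hα₁)]
  exact rpow_le_rpow hnonneg hle (one_div_nonneg.2 hq.le)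

end GAConvexOn

theorem stmt_6_general {f f' : ℝ → ℝ} {a b α m q : ℝ} (ha : 0 < a) (hab : a < b)
    (hα : -1 < α) (hm : m ≠ 0) (hq : 1 < q) (hf : ContinuousOn f (Icc a b))
    (hderiv : ∀ x ∈ Ioo a b, HasDerivAt f (f' x) x)
    (hconv : GAConvexOn α m (max (a ^ (1 / m)) b) fun x => |f' x| ^ q) :
    |(b ^ 2 * f b - a ^ 2 * f a) / 2 - ∫ x in a..b, x * f x| ≤
      ((log b - log a) / 2) * (1 / (α + 1)) ^ (1 / q) *
        L (a ^ (3 * q / (q - 1))) (b ^ (3 * q / (q - 1))) ^ (1 - 1 / q) *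
        (|f' b| ^ q + α * m * |f' (a ^ (1 / m))| ^ q) ^ (1 / q) := by
  have hb : 0 < b := ha.trans hab
  have hq₀ : 0 < q := one_pos.trans hq
  have hpq : (q / (q - 1)).HolderConjugate q := (Real.HolderConjugate.conjExponent hq).symm
  have hmem := hconv.memLp_comp_geomInterp ha.le hb.le hα hm hq₀ (le_max_left _ _)
    (le_max_right _ _) (aestronglyMeasurable_deriv_comp_geomInterp ha hab hderiv)
  have hf' : IntervalIntegrable f' volume a b := intervalIntegrable_of_comp_geomInterp ha hab.le
    ((intervalIntegrable_iff_integrableOn_Ioc_of_le zero_le_one).2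
      (hmem.integrable (by simpa using hq.le)))
  have hexp : (((2 : ℕ) : ℝ) + 1) * (q / (q - 1)) = 3 * q / (q - 1) := by push_cast; ring
  have hholder := abs_integral_pow_mul_le_logMean_mul_Lq ha hab 2 hpq hmem
  rw [hexp, one_div (q / _), ← hpq.symm.one_sub_inv, ← one_div] at hholder
  have hLq := hconv.Lq_comp_geomInterp_le ha.le hb.le hα hm hq₀ (le_max_left _ _)
    (le_max_right _ _) hmem
  have hlog : 0 ≤ log b - log a := sub_nonneg.2 (log_le_log ha hab.le)
  have hL := L_nonneg (rpow_pos_of_pos ha (3 * q / (q - 1))) (rpow_pos_of_pos hb (3 * q / (q - 1)))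
  rw [half_sq_mul_sub_integral_mul_eq hab.le hf hderiv hf', abs_div, abs_two]
  grw [hholder, hLq]
  exact le_of_eq (by ring)

theorem stmt_6 (f f' : ℝ → ℝ) (a b α m q : ℝ) (ha : 0 < a) (hab : a < b)
    (hα : α ∈ Ioc (0:ℝ) 1) (hm : m ∈ Ioc (0:ℝ) 1) (hq : 1 < q)
    (hderiv : ∀ x ∈ Ici (0:ℝ), HasDerivAt f (f' x) x)
    (hint : IntervalIntegrable f' volume a b)
    (hconv : GAConvexOn α m (max (a ^ (1/m)) b) (fun x => |f' x| ^ q)) :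
    |(b ^ 2 * f b - a ^ 2 * f a) / 2 - ∫ x in a..b, x * f x| ≤
      ((Real.log b - Real.log a) / 2) * (1 / (α + 1)) ^ (1/q) *
        L (a ^ (3 * q / (q - 1))) (b ^ (3 * q / (q - 1))) ^ (1 - 1/q) *
        (|f' b| ^ q + α * m * |f' (a ^ (1/m))| ^ q) ^ (1/q) := by
  exact stmt_6_general ha hab (by linarith [hα.1]) hm.1.ne' hq
    (fun x hx => (hderiv x (ha.le.trans hx.1)).continuousAt.continuousWithinAt)
    (fun x hx => hderiv x (ha.trans hx.1).le) hconv
end
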